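/- arXiv:2005.04450 — 2 statements merged into one kernel-verified Lean document; each statement's English description precedes it below -/
import Mathlib

section
/- Let $0<p\le 1<q<\infty$, $-1<\beta\le\alpha<\infty$, $t=(\beta+2)/(\alpha+2)$, $1/q+1/q'=1$. Then $T_{\mu,\beta}:L^p_a(\omega_\alpha)\to L^q_a(\omega_\beta)$ is compact if and only if $\mu$ is a vanishing $(1/p+t/q')$-Carleson measure for $L^1_a(\omega_\alpha)$, i.e. for each $r\in(0,1)$, $\lim_{|z|\to 1^-}\mu(D(z,r))/(1-|z|^2)^{(\alpha+2)(1/p+t/q')}=0$. -/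
/-!
Sufficiency. Minkowski's integral inequality and the Forelli–Rudin estimate
`∫ (1-|z|²)^b |1 - z w̄|^{-(2+b)q} dA(z) ≲ (1-|w|²)^{(2+b)(1-q)}` bound `‖T_{μ,b} f‖` in `L^q(ω_b)` by
`∫ |f(w)| (1-|w|²)^{-(b+2)/q'} dμ(w)` (`toep_norm_le`). Because `p ≤ 1`, writing
`|f| = |f|^{1-p} |f|^p`, estimating the first factor by the pointwise growth of Bergman functions and
the second by the sub-mean-value property of `|f|^p`, and applying Tonelli's theorem, this integral is
at most `C ε ‖f‖` as soon as `μ(D(z,1/2)) ≤ ε (1-|z|²)^s` with `s = (a+2)/p + (b+2)/q'`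
(`carleson_embedding`). For a vanishing Carleson measure, `ε` may be taken small after removing from
`μ` a compact disk, on which the functions converge to `0` uniformly (`tendsto_wnorm_toep`).

Necessity. For `N = 2 + b + k` with `k` large, the functions
`f_z(w) = w^k (1-|z|²)^{N-(a+2)/p} (1 - w z̄)^{-N}` are bounded in `L^p_a(ω_a)` and tend to `0` locally
uniformly as `|z| → 1`. The `k`-th derivative of `T_{μ,b} f_z` at `z` is a constant times
`(1-|z|²)^{N-(a+2)/p} ∫ |w|^{2k} |1 - z w̄|^{-2N} dμ(w)`, an integral of a nonnegative function that is
at least a constant times `(1-|z|²)^{-2N} μ(D(z,r))`. On the other hand, the growth estimate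
and Cauchy's estimates bound this derivative by a constant times
`‖T_{μ,b} f_z‖ (1-|z|²)^{-(b+2)/q-k}`. Comparing exponents,
`μ(D(z,r)) ≲ ‖T_{μ,b} f_z‖ (1-|z|²)^s` (`measure_le_of_toep`), so compactness forces the vanishing
condition (`vanishing_of_compact`).
-/


open MeasureTheory Metric Filter Complex Set
open scoped ENNReal NNReal Topology

/-- The normalized area measure on `ℂ`. -/
noncomputable def dA : Measure ℂ := (ENNReal.ofReal Real.pi)⁻¹ • volume

/-- The standard weight `ω_a(z) = (1+a)(1-|z|²)^a`. -/
noncomputable def stdW (a : ℝ) (z : ℂ) : ℝ := (1 + a) * (1 - ‖z‖ ^ 2) ^ a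

/-- The weighted `L^p` (quasi-)norm over the unit disk. -/
noncomputable def wnorm (p a : ℝ) (f : ℂ → ℂ) : ℝ≥0∞ :=
  (∫⁻ z in ball (0 : ℂ) 1, ENNReal.ofReal (‖f z‖ ^ p * stdW a z) ∂dA) ^ (1 / p)

/-- The pseudohyperbolic disk `D(z,r)`. -/
def pD (z : ℂ) (r : ℝ) : Set ℂ :=
  {w | w ∈ ball (0 : ℂ) 1 ∧ ‖(z - w) / (1 - (starRingEnd ℂ) z * w)‖ < r}

/-- The Toeplitz operator `T_{μ,b}`. -/
noncomputable def Toep (μ : Measure ℂ) (b : ℝ) (f : ℂ → ℂ) (z : ℂ) : ℂ :=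
  ∫ w in ball (0 : ℂ) 1, f w / (1 - z * (starRingEnd ℂ) w) ^ (((2 + b : ℝ)) : ℂ) ∂μ

/-- The Bloch norm. -/
noncomputable def blochNorm (g : ℂ → ℂ) : ℝ :=
  ‖g 0‖ + sSup ((fun z => (1 - ‖z‖ ^ 2) * ‖deriv g z‖) '' ball (0 : ℂ) 1)

/-- Membership in the Bloch space. -/
def MemBloch (g : ℂ → ℂ) : Prop :=
  DifferentiableOn ℂ g (ball (0 : ℂ) 1) ∧
    BddAbove ((fun z => (1 - ‖z‖ ^ 2) * ‖deriv g z‖) '' ball (0 : ℂ) 1)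

/-! ### Integrals in polar coordinates and mean values -/

/-- Powers of comparable positive numbers are comparable, whatever the sign of the exponent. -/
lemma rpow_comp {x y : ℝ} (s : ℝ) (hx : 0 < x) (hy : 0 < y) (h1 : x ≤ 4 * y) (h2 : y ≤ 4 * x) :
    x ^ s ≤ 4 ^ |s| * y ^ s := by
  rcases le_total 0 s with hs | hs
  · rw [abs_of_nonneg hs, ← Real.mul_rpow (by norm_num) hy.le]
    exact Real.rpow_le_rpow hx.le h1 hs
  · rw [abs_of_nonpos hs]
    have h3 : y / 4 ≤ x := by linarith
    calc x ^ s ≤ (y / 4) ^ s := Real.rpow_le_rpow_of_nonpos (by positivity) h3 hs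
      _ = 4 ^ (-s) * y ^ s := by
        rw [Real.div_rpow hy.le (by norm_num), Real.rpow_neg (by norm_num)]
        field_simp

lemma lintegral_polar {F : ℂ → ℝ≥0∞} (hF : Measurable F) :
    ∫⁻ z, F z = ∫⁻ r in Ioi (0 : ℝ), ∫⁻ θ in Ioo (-Real.pi) Real.pi,
      ENNReal.ofReal r * F (circleMap 0 r θ) := by
  rw [← Complex.lintegral_comp_polarCoord_symm]
  have e : (polarCoord.target : Set (ℝ × ℝ)) = Ioi (0 : ℝ) ×ˢ Ioo (-Real.pi) Real.pi := rfl
  rw [e, Measure.volume_eq_prod, setLIntegral_prod]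
  · refine lintegral_congr fun r => lintegral_congr fun θ => ?_
    simp only [smul_eq_mul, Complex.polarCoord_symm_apply, circleMap, zero_add]
    rw [Complex.exp_mul_I]
    push_cast
    rfl
  · refine Measurable.aemeasurable ?_
    simp only [smul_eq_mul, Complex.polarCoord_symm_apply]
    fun_prop

/-- The mean value property on a circle, as an inequality for the modulus. -/
lemma circle_mean {f : ℂ → ℂ} {c : ℂ} {R r : ℝ} (hf : DifferentiableOn ℂ f (ball c R))
    (hr : 0 < r) (hrR : r < R) :
    ENNReal.ofReal (2 * Real.pi * ‖f c‖) ≤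
      ∫⁻ θ in Ioo (-Real.pi) Real.pi, ENNReal.ofReal ‖f (circleMap c r θ)‖ := by
  have hd : DiffContOnCl ℂ f (ball c |r|) := by
    rw [abs_of_pos hr]
    refine DifferentiableOn.diffContOnCl ?_
    rw [closure_ball c hr.ne']
    exact hf.mono (closedBall_subset_ball hrR)
  have h1 := hd.circleAverage
  rw [Real.circleAverage_def] at h1
  have h2 : ∫ θ in (-Real.pi)..Real.pi, f (circleMap c r θ) =
      ∫ θ in (0 : ℝ)..2 * Real.pi, f (circleMap c r θ) := by
    have hper : Function.Periodic (fun θ => f (circleMap c r θ)) (2 * Real.pi) :=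
      fun θ => by simp only [periodic_circleMap c r θ]
    have := hper.intervalIntegral_add_eq (-Real.pi) 0
    rw [zero_add] at this
    rw [← this]
    congr 1
    ring
  have h3 : ‖∫ θ in (-Real.pi)..Real.pi, f (circleMap c r θ)‖ = 2 * Real.pi * ‖f c‖ := by
    rw [h2, ← h1, norm_smul, Real.norm_of_nonneg (by positivity)]
    field_simp
  rw [← h3, intervalIntegral.integral_of_le (by linarith [Real.pi_pos]),
    ← restrict_Ioo_eq_restrict_Ioc, ofReal_norm]
  simp only [ofReal_norm]
  exact enorm_integral_le_lintegral_enorm _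

/-- A holomorphic function is dominated by the area integral of its modulus over a disk. -/
lemma area_mean {f : ℂ → ℂ} {c : ℂ} {R : ℝ} (hR : 0 < R)
    (hf : DifferentiableOn ℂ f (ball c R)) :
    ENNReal.ofReal (‖f c‖ * R ^ 2) ≤ ∫⁻ z in ball c R, ENNReal.ofReal ‖f z‖ := by
  classical
  set G : ℂ → ℝ≥0∞ := (ball c R).piecewise (fun z => ENNReal.ofReal ‖f z‖) 0 with hG
  have hGm : Measurable G := by
    refine ContinuousOn.measurable_piecewise ?_ continuousOn_const measurableSet_ball
    exact ENNReal.continuous_ofReal.comp_continuousOn hf.continuousOn.norm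
  have h1 : ∫⁻ z in ball c R, ENNReal.ofReal ‖f z‖ = ∫⁻ z, G (c + z) := by
    rw [lintegral_add_left_eq_self G c, ← lintegral_indicator measurableSet_ball, hG,
      piecewise_eq_indicator]
  rw [h1, lintegral_polar (by fun_prop)]
  calc ENNReal.ofReal (‖f c‖ * R ^ 2)
      ≤ ENNReal.ofReal (R / 2 * (2 * Real.pi * ‖f c‖)) * ENNReal.ofReal (R / 2) := by
        rw [← ENNReal.ofReal_mul (by positivity)]
        refine ENNReal.ofReal_le_ofReal ?_
        have : 0 ≤ ‖f c‖ * R ^ 2 := by positivity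
        nlinarith [Real.pi_gt_three]
    _ = ∫⁻ r in Ioo (R / 2) R, ENNReal.ofReal (R / 2 * (2 * Real.pi * ‖f c‖)) := by
        rw [setLIntegral_const, Real.volume_Ioo]
        congr 2
        ring
    _ ≤ ∫⁻ r in Ioo (R / 2) R, ∫⁻ θ in Ioo (-Real.pi) Real.pi,
          ENNReal.ofReal r * G (c + circleMap 0 r θ) := by
        refine setLIntegral_mono' measurableSet_Ioo fun r hr => ?_
        have hr0 : 0 < r := lt_trans (by positivity) hr.1
        rw [lintegral_const_mul' _ _ ENNReal.ofReal_ne_top, ENNReal.ofReal_mul (by positivity)]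
        refine mul_le_mul' (ENNReal.ofReal_le_ofReal hr.1.le) ((circle_mean hf hr0 hr.2).trans ?_)
        refine lintegral_mono fun θ => ?_
        have h2 : c + circleMap 0 r θ = circleMap c r θ := by simp [circleMap]
        have h3 : circleMap c r θ ∈ ball c R := by
          rw [mem_ball, dist_eq_norm]
          simpa [circleMap, abs_of_pos hr0] using hr.2
        rw [h2, hG, piecewise_eq_of_mem _ _ _ h3]
    _ ≤ _ := lintegral_mono_set fun r hr => lt_trans (by positivity) hr.1

/-! ### Subharmonicity of `|f|^p` -/

/-- The sub-mean-value property for `|f|^p`, `p ≤ 1`, for `f` continuous up to the boundary.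
At a maximum point `z₀` of `(R - |z - c|)^{2/p} |f z|`, the modulus `|f|` is at most
`4^{1/p} |f z₀|` on the disk about `z₀` of half the distance to the boundary, so that `|f|` can be
traded for `|f|^p |f z₀|^{1-p}` in the area mean value inequality there. -/
lemma submean_aux {p : ℝ} (hp : 0 < p) (hp1 : p ≤ 1) {f : ℂ → ℂ} {c : ℂ} {R : ℝ} (hR : 0 < R)
    (hf : DifferentiableOn ℂ f (ball c R)) (hfc : ContinuousOn f (closedBall c R)) :
    ENNReal.ofReal (‖f c‖ ^ p * R ^ 2) ≤
      ENNReal.ofReal (4 * (4 ^ (1 / p)) ^ (1 - p)) *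
        ∫⁻ z in ball c R, ENNReal.ofReal (‖f z‖ ^ p) := by
  rcases eq_or_ne (f c) 0 with h0 | h0
  · simp [h0, Real.zero_rpow hp.ne']
  have hp2 : 0 ≤ 2 / p := by positivity
  obtain ⟨z₀, hz₀, hmax⟩ := (isCompact_closedBall c R).exists_isMaxOn
    ⟨c, mem_closedBall_self hR.le⟩
    (f := fun z => (R - dist z c) ^ (2 / p) * ‖f z‖) (by
      refine ContinuousOn.mul ?_ hfc.norm
      exact ContinuousOn.rpow_const (by fun_prop) fun _ _ => Or.inr hp2)
  have hmax' : ∀ z ∈ closedBall c R,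
      (R - dist z c) ^ (2 / p) * ‖f z‖ ≤ (R - dist z₀ c) ^ (2 / p) * ‖f z₀‖ := hmax
  have hc := hmax' c (mem_closedBall_self hR.le)
  rw [dist_self, sub_zero] at hc
  have hpos : 0 < (R - dist z₀ c) ^ (2 / p) * ‖f z₀‖ :=
    lt_of_lt_of_le (by have := norm_pos_iff.2 h0; positivity) hc
  have hd0 : 0 ≤ R - dist z₀ c := sub_nonneg.2 hz₀
  have hM : 0 < ‖f z₀‖ := by
    rcases (norm_nonneg (f z₀)).eq_or_lt with h | h
    · rw [← h] at hpos; simp at hpos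
    · exact h
  have hd : 0 < R - dist z₀ c := by
    rcases hd0.eq_or_lt with h | h
    · rw [← h, Real.zero_rpow (by positivity)] at hpos; simp at hpos
    · exact h
  set M := ‖f z₀‖ with hMdef
  obtain ⟨ρ, hρ⟩ : ∃ ρ, R - dist z₀ c = 2 * ρ := ⟨(R - dist z₀ c) / 2, by ring⟩
  rw [hρ] at hd hc hmax'
  have hρ0 : 0 < ρ := by linarith
  set L : ℝ := 4 ^ (1 / p) with hL
  have hL0 : 0 < L := by positivity
  have e2 : (2 * ρ) ^ (2 / p) = L * ρ ^ (2 / p) := by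
    rw [Real.mul_rpow (by norm_num) hρ0.le, hL]
    congr 1
    rw [show (4 : ℝ) = 2 ^ (2 : ℝ) by norm_num, ← Real.rpow_mul (by norm_num)]
    congr 1
    ring
  have hsub : ball z₀ ρ ⊆ ball c R := by
    refine ball_subset_ball' ?_
    linarith
  have hb : ∀ z ∈ ball z₀ ρ, ‖f z‖ ≤ L * M := by
    intro z hz
    have h1 := hmax' z (ball_subset_closedBall (hsub hz))
    have h2 : ρ ≤ R - dist z c := by
      have := dist_triangle z z₀ c
      have := mem_ball.1 hz
      linarith
    have h3 : ρ ^ (2 / p) * ‖f z‖ ≤ ρ ^ (2 / p) * (L * M) := by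
      calc _ ≤ (R - dist z c) ^ (2 / p) * ‖f z‖ := by gcongr
        _ ≤ _ := h1
        _ = _ := by rw [e2]; ring
    exact le_of_mul_le_mul_left h3 (by positivity)
  have h4 : ENNReal.ofReal (M * ρ ^ 2) ≤
      ENNReal.ofReal ((L * M) ^ (1 - p)) * ∫⁻ z in ball c R, ENNReal.ofReal (‖f z‖ ^ p) := by
    calc _ ≤ ∫⁻ z in ball z₀ ρ, ENNReal.ofReal ‖f z‖ := area_mean hρ0 (hf.mono hsub)
      _ ≤ ∫⁻ z in ball z₀ ρ, ENNReal.ofReal ((L * M) ^ (1 - p)) * ENNReal.ofReal (‖f z‖ ^ p) := by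
        refine setLIntegral_mono' measurableSet_ball fun z hz => ?_
        rw [← ENNReal.ofReal_mul (by positivity)]
        refine ENNReal.ofReal_le_ofReal ?_
        calc ‖f z‖ = ‖f z‖ ^ (1 - p) * ‖f z‖ ^ p := by
              rw [← Real.rpow_add' (norm_nonneg _) (by norm_num)]; simp
          _ ≤ _ := by
              gcongr
              exact hb z hz
      _ ≤ _ := by
        rw [lintegral_const_mul' _ _ ENNReal.ofReal_ne_top]
        gcongr
  have h5 : ‖f c‖ ^ p * R ^ 2 ≤ 4 * M ^ (p - 1) * (M * ρ ^ 2) := by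
    have := Real.rpow_le_rpow (by positivity) hc hp.le
    rw [Real.mul_rpow (by positivity) (norm_nonneg _), Real.mul_rpow (by positivity) hM.le,
      ← Real.rpow_mul hR.le, ← Real.rpow_mul (by positivity), div_mul_cancel₀ _ hp.ne',
      Real.rpow_two, Real.rpow_two] at this
    calc _ = R ^ 2 * ‖f c‖ ^ p := by ring
      _ ≤ _ := this
      _ = 4 * (M ^ (p - 1) * M) * ρ ^ 2 := by
        rw [Real.rpow_sub_one hM.ne']; field_simp; ring
      _ = _ := by ring
  calc _ ≤ ENNReal.ofReal (4 * M ^ (p - 1) * (M * ρ ^ 2)) := ENNReal.ofReal_le_ofReal h5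
    _ = ENNReal.ofReal (4 * M ^ (p - 1)) * ENNReal.ofReal (M * ρ ^ 2) :=
      ENNReal.ofReal_mul (by positivity)
    _ ≤ ENNReal.ofReal (4 * M ^ (p - 1)) * (ENNReal.ofReal ((L * M) ^ (1 - p)) *
        ∫⁻ z in ball c R, ENNReal.ofReal (‖f z‖ ^ p)) := by gcongr
    _ = _ := by
      rw [← mul_assoc, ← ENNReal.ofReal_mul (by positivity)]
      congr 2
      rw [Real.mul_rpow hL0.le hM.le, show p - 1 = -(1 - p) by ring, Real.rpow_neg hM.le]
      field_simp

/-- The sub-mean-value property of `|f|^p` for every `p > 0`, with an unspecified constant. The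
case `p > 1` follows from `p ≤ 1` applied to the power `f ^ ⌈p⌉`. -/
lemma submean {p : ℝ} (hp : 0 < p) : ∃ C : ℝ, 0 < C ∧ ∀ (f : ℂ → ℂ) (c : ℂ) (R : ℝ), 0 < R →
    DifferentiableOn ℂ f (ball c R) →
    ENNReal.ofReal (‖f c‖ ^ p * R ^ 2) ≤
      ENNReal.ofReal C * ∫⁻ z in ball c R, ENNReal.ofReal (‖f z‖ ^ p) := by
  set m := ⌈p⌉₊ with hm
  have hm0 : (0 : ℝ) < m := by exact_mod_cast Nat.ceil_pos.2 hp
  have hs0 : 0 < p / m := by positivity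
  have hs1 : p / m ≤ 1 := (div_le_one hm0).2 (Nat.le_ceil p)
  refine ⟨4 * (4 * (4 ^ (1 / (p / m))) ^ (1 - p / m)), by positivity, fun f c R hR hf => ?_⟩
  have hsub : closedBall c (R / 2) ⊆ ball c R := closedBall_subset_ball (by linarith)
  have h := submean_aux hs0 hs1 (f := fun z => f z ^ m) (c := c) (R := R / 2) (by positivity)
    ((hf.mono (ball_subset_closedBall.trans hsub)).pow m) ((hf.continuousOn.mono hsub).pow m)
  have e : ∀ z, ‖f z ^ m‖ ^ (p / m) = ‖f z‖ ^ p := by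
    intro z
    rw [norm_pow, ← Real.rpow_natCast, ← Real.rpow_mul (norm_nonneg _), mul_div_cancel₀ _ hm0.ne']
  simp only [e] at h
  calc ENNReal.ofReal (‖f c‖ ^ p * R ^ 2)
      = ENNReal.ofReal 4 * ENNReal.ofReal (‖f c‖ ^ p * (R / 2) ^ 2) := by
        rw [← ENNReal.ofReal_mul (by norm_num)]; congr 1; ring
    _ ≤ ENNReal.ofReal 4 * (ENNReal.ofReal (4 * (4 ^ (1 / (p / m))) ^ (1 - p / m)) *
        ∫⁻ z in ball c R, ENNReal.ofReal (‖f z‖ ^ p)) := by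
        gcongr
        refine h.trans ?_
        gcongr
        linarith
    _ = _ := by rw [← mul_assoc, ← ENNReal.ofReal_mul (by norm_num)]

/-! ### Growth of functions in weighted Bergman spaces -/

lemma lintegral_dA (s : Set ℂ) (F : ℂ → ℝ≥0∞) :
    ∫⁻ z in s, F z ∂dA = (ENNReal.ofReal Real.pi)⁻¹ * ∫⁻ z in s, F z := by
  rw [dA, Measure.restrict_smul, lintegral_smul_measure, smul_eq_mul]

lemma lintegral_vol (s : Set ℂ) (F : ℂ → ℝ≥0∞) :
    ∫⁻ z in s, F z = ENNReal.ofReal Real.pi * ∫⁻ z in s, F z ∂dA := by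
  rw [lintegral_dA, ← mul_assoc, ENNReal.mul_inv_cancel, one_mul]
  · simpa using Real.pi_pos
  · exact ENNReal.ofReal_ne_top

/-- The weight is essentially constant on the disk `B(w, (1 - |w|) / 4)`. -/
lemma near_comp {w z : ℂ} (hw : w ∈ ball (0 : ℂ) 1) (hz : z ∈ ball w ((1 - ‖w‖) / 4)) :
    z ∈ ball (0 : ℂ) 1 ∧ 0 < 1 - ‖w‖ ^ 2 ∧ 0 < 1 - ‖z‖ ^ 2 ∧
      1 - ‖w‖ ^ 2 ≤ 4 * (1 - ‖z‖ ^ 2) ∧ 1 - ‖z‖ ^ 2 ≤ 4 * (1 - ‖w‖ ^ 2) := by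
  rw [mem_ball_zero_iff] at hw ⊢
  rw [mem_ball, dist_eq_norm] at hz
  have h1 : |‖z‖ - ‖w‖| < (1 - ‖w‖) / 4 := (abs_norm_sub_norm_le z w).trans_lt hz
  rw [abs_lt] at h1
  have hw0 := norm_nonneg w
  have hz0 := norm_nonneg z
  obtain ⟨h2, h3⟩ := h1
  have hz1 : ‖z‖ < 1 := by linarith
  refine ⟨hz1, ?_, ?_, ?_, ?_⟩ <;> nlinarith

/-- The sub-mean-value property for the weighted area measure. -/
lemma submean_weight {p a : ℝ} (hp : 0 < p) (ha : -1 < a) : ∃ C : ℝ, 0 < C ∧ ∀ f : ℂ → ℂ,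
    DifferentiableOn ℂ f (ball 0 1) → ∀ w ∈ ball (0 : ℂ) 1,
    ENNReal.ofReal (‖f w‖ ^ p * (1 - ‖w‖ ^ 2) ^ (a + 2)) ≤
      ENNReal.ofReal C * ∫⁻ z in ball w ((1 - ‖w‖) / 4),
        ENNReal.ofReal (‖f z‖ ^ p * stdW a z) ∂dA := by
  obtain ⟨C, hC, h⟩ := submean hp
  have ha1 : 0 < 1 + a := by linarith
  refine ⟨64 * C * (4 ^ |a| / (1 + a)) * Real.pi, by positivity, fun f hf w hw => ?_⟩
  have hw1 : ‖w‖ < 1 := mem_ball_zero_iff.1 hw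
  have hw0 := norm_nonneg w
  have hR : 0 < (1 - ‖w‖) / 4 := by linarith
  have hsub : ball w ((1 - ‖w‖) / 4) ⊆ ball 0 1 := fun z hz => (near_comp hw hz).1
  have hy : 0 < 1 - ‖w‖ ^ 2 := (near_comp hw (mem_ball_self hR)).2.1
  have h1 := h f w _ hR (hf.mono hsub)
  calc ENNReal.ofReal (‖f w‖ ^ p * (1 - ‖w‖ ^ 2) ^ (a + 2))
      ≤ ENNReal.ofReal (64 * (1 - ‖w‖ ^ 2) ^ a) *
          ENNReal.ofReal (‖f w‖ ^ p * ((1 - ‖w‖) / 4) ^ 2) := by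
        rw [← ENNReal.ofReal_mul (by positivity), Real.rpow_add hy, Real.rpow_two]
        refine ENNReal.ofReal_le_ofReal ?_
        have h2 : (1 - ‖w‖ ^ 2) ^ 2 ≤ 64 * ((1 - ‖w‖) / 4) ^ 2 := by
          have : 1 - ‖w‖ ^ 2 ≤ 2 * (1 - ‖w‖) := by nlinarith
          nlinarith
        calc _ = (‖f w‖ ^ p * (1 - ‖w‖ ^ 2) ^ a) * (1 - ‖w‖ ^ 2) ^ 2 := by ring
          _ ≤ (‖f w‖ ^ p * (1 - ‖w‖ ^ 2) ^ a) * (64 * ((1 - ‖w‖) / 4) ^ 2) := by gcongr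
          _ = _ := by ring
    _ ≤ ENNReal.ofReal (64 * (1 - ‖w‖ ^ 2) ^ a) * (ENNReal.ofReal C *
          ∫⁻ z in ball w ((1 - ‖w‖) / 4), ENNReal.ofReal (‖f z‖ ^ p)) := by gcongr
    _ = ENNReal.ofReal (64 * C) * ∫⁻ z in ball w ((1 - ‖w‖) / 4),
          ENNReal.ofReal ((1 - ‖w‖ ^ 2) ^ a) * ENNReal.ofReal (‖f z‖ ^ p) := by
        rw [lintegral_const_mul' _ _ ENNReal.ofReal_ne_top, ← mul_assoc, ← mul_assoc,
          ← ENNReal.ofReal_mul (by positivity), ← ENNReal.ofReal_mul (by positivity)]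
        congr 2
        ring
    _ ≤ ENNReal.ofReal (64 * C) * ∫⁻ z in ball w ((1 - ‖w‖) / 4),
          ENNReal.ofReal (4 ^ |a| / (1 + a)) * ENNReal.ofReal (‖f z‖ ^ p * stdW a z) := by
        refine mul_le_mul' le_rfl (setLIntegral_mono' measurableSet_ball fun z hz => ?_)
        obtain ⟨_, _, hx, h3, h4⟩ := near_comp hw hz
        rw [← ENNReal.ofReal_mul (by positivity), ← ENNReal.ofReal_mul (by positivity)]
        refine ENNReal.ofReal_le_ofReal ?_
        rw [stdW]
        calc _ ≤ (4 ^ |a| * (1 - ‖z‖ ^ 2) ^ a) * ‖f z‖ ^ p := by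
              gcongr
              exact rpow_comp a hy hx h3 h4
          _ = _ := by field_simp
    _ = _ := by
        rw [lintegral_const_mul' _ _ ENNReal.ofReal_ne_top, lintegral_vol, ← mul_assoc,
          ← mul_assoc, ← ENNReal.ofReal_mul (by positivity), ← ENNReal.ofReal_mul (by positivity)]

/-- Growth of functions in the weighted Bergman space. -/
lemma pointwise_growth {p a : ℝ} (hp : 0 < p) (ha : -1 < a) : ∃ C : ℝ, 0 < C ∧ ∀ f : ℂ → ℂ,
    DifferentiableOn ℂ f (ball 0 1) → ∀ w ∈ ball (0 : ℂ) 1,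
    ENNReal.ofReal (‖f w‖ * (1 - ‖w‖ ^ 2) ^ ((a + 2) / p)) ≤ ENNReal.ofReal C * wnorm p a f := by
  obtain ⟨C, hC, h⟩ := submean_weight hp ha
  refine ⟨C ^ (1 / p), by positivity, fun f hf w hw => ?_⟩
  have hw1 : ‖w‖ < 1 := mem_ball_zero_iff.1 hw
  have hR : 0 < (1 - ‖w‖) / 4 := by linarith
  have hy : 0 < 1 - ‖w‖ ^ 2 := (near_comp hw (mem_ball_self hR)).2.1
  have h1 : ENNReal.ofReal (‖f w‖ ^ p * (1 - ‖w‖ ^ 2) ^ (a + 2)) ≤ ENNReal.ofReal C *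
      ∫⁻ z in ball 0 1, ENNReal.ofReal (‖f z‖ ^ p * stdW a z) ∂dA :=
    (h f hf w hw).trans (by
      gcongr
      exact fun z hz => (near_comp hw hz).1)
  have h2 := ENNReal.rpow_le_rpow h1 (show 0 ≤ 1 / p by positivity)
  rw [ENNReal.mul_rpow_of_nonneg _ _ (by positivity), ENNReal.ofReal_rpow_of_pos hC,
    ENNReal.ofReal_rpow_of_nonneg (by positivity) (by positivity),
    Real.mul_rpow (by positivity) (by positivity), ← Real.rpow_mul (norm_nonneg _),
    ← Real.rpow_mul hy.le, mul_one_div_cancel hp.ne', Real.rpow_one, mul_one_div] at h2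
  exact h2

/-! ### The Forelli–Rudin estimate -/

/-- Lower bound for `|1 - x e^{iθ}|`, from `|1 - x e^{iθ}|² = (1-x)² + 4x sin²(θ/2)` and Jordan's
inequality. -/
lemma kernel_lower {x θ : ℝ} (hx0 : 0 ≤ x) (hx : x < 1) (hθ : |θ| ≤ Real.pi) :
    ((1 - x) + |θ|) / 20 ≤ ‖1 - circleMap 0 x θ‖ := by
  have h1 : ‖1 - circleMap 0 x θ‖ ^ 2 = (1 - x) ^ 2 + 4 * x * Real.sin (θ / 2) ^ 2 := by
    have e : (1 : ℂ) - circleMap 0 x θ = ⟨1 - x * Real.cos θ, -(x * Real.sin θ)⟩ := by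
      apply Complex.ext <;> simp [circleMap, Complex.exp_re, Complex.exp_im]
    rw [← Complex.normSq_eq_norm_sq, e, Complex.normSq_mk]
    have h2 : Real.cos θ = 1 - 2 * Real.sin (θ / 2) ^ 2 := by
      have := Real.cos_two_mul (θ / 2)
      rw [mul_div_cancel₀ _ (two_ne_zero)] at this
      have h3 := Real.sin_sq_add_cos_sq (θ / 2)
      linarith
    have h4 := Real.sin_sq_add_cos_sq θ
    have h5 : Real.sin θ ^ 2 = 1 - Real.cos θ ^ 2 := by linarith
    calc _ = 1 - 2 * x * Real.cos θ + x ^ 2 * (Real.cos θ ^ 2 + Real.sin θ ^ 2) := by ring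
      _ = _ := by rw [h5, h2]; ring
  have h6 : |θ| / 4 ≤ |Real.sin (θ / 2)| := by
    have h7 := Real.mul_le_sin (x := |θ| / 2) (by positivity) (by linarith)
    have h8 : Real.sin (|θ| / 2) ≤ |Real.sin (θ / 2)| := by
      rcases abs_cases θ with ⟨h, _⟩ | ⟨h, _⟩
      · rw [h]; exact le_abs_self _
      · rw [h, neg_div, Real.sin_neg]; exact neg_le_abs _
    have h9 : |θ| / 4 ≤ 2 / Real.pi * (|θ| / 2) := by
      have : (1 : ℝ) / 2 ≤ 2 / Real.pi := by
        rw [div_le_div_iff₀ (by norm_num) Real.pi_pos]; linarith [Real.pi_le_four]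
      nlinarith [abs_nonneg θ]
    linarith
  have h10 : (|θ| / 4) ^ 2 ≤ Real.sin (θ / 2) ^ 2 := by
    rw [← sq_abs (Real.sin (θ / 2))]
    exact pow_le_pow_left₀ (by positivity) h6 2
  refine (sq_le_sq₀ (by have := abs_nonneg θ; linarith) (norm_nonneg _)).1 ?_
  rw [h1]
  have hθ4 : |θ| ≤ 4 := hθ.trans Real.pi_le_four
  have := abs_nonneg θ
  rcases le_total x (1 / 2) with h | h
  · nlinarith [mul_nonneg hx0 (sq_nonneg (Real.sin (θ / 2)))]
  · nlinarith [mul_le_mul h h10 (by positivity) hx0, sq_nonneg (1 - x - |θ|)]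

lemma lintegral_Ioi_rpow_lt {A s : ℝ} (hA : 0 < A) (hs : s < -1) :
    ∫⁻ x in Ioi A, ENNReal.ofReal (x ^ s) = ENNReal.ofReal (A ^ (s + 1) / (-(s + 1))) := by
  rw [← ofReal_integral_eq_lintegral_ofReal (integrableOn_Ioi_rpow_of_lt hs hA),
    integral_Ioi_rpow_of_lt hs hA]
  · congr 1
    rw [div_neg, neg_div]
  · exact (ae_restrict_mem measurableSet_Ioi).mono fun x hx =>
      Real.rpow_nonneg (hA.le.trans (le_of_lt hx)) _

/-- The angular part of the Forelli–Rudin estimate. -/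
lemma angular_bound {c : ℝ} (hc : 1 < c) : ∃ C : ℝ, 0 < C ∧ ∀ x : ℝ, 0 ≤ x → x < 1 →
    ∫⁻ θ in Ioo (-Real.pi) Real.pi, ENNReal.ofReal (‖1 - circleMap 0 x θ‖ ^ (-c)) ≤
      ENNReal.ofReal (C * (1 - x) ^ (1 - c)) := by
  refine ⟨20 ^ c * (2 / (c - 1)), by have : 0 < c - 1 := by linarith
                                     positivity, fun x hx0 hx => ?_⟩
  have hA : 0 < 1 - x := by linarith
  have hc1 : 0 < c - 1 := by linarith
  set h : ℝ → ℝ≥0∞ := (Ici (1 - x)).indicator fun t => ENNReal.ofReal (t ^ (-c)) with hh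
  have hhm : Measurable h := Measurable.indicator (by fun_prop) measurableSet_Ici
  have hval : ∀ t, 0 ≤ t → h ((1 - x) + t) = ENNReal.ofReal (((1 - x) + t) ^ (-c)) :=
    fun t ht => indicator_of_mem (by simpa using ht) _
  have hint : ∫⁻ t, h t = ENNReal.ofReal ((1 - x) ^ (1 - c) / (c - 1)) := by
    rw [hh, lintegral_indicator measurableSet_Ici, setLIntegral_congr Ioi_ae_eq_Ici.symm,
      lintegral_Ioi_rpow_lt hA (by linarith)]
    congr 2 <;> ring_nf
  calc _ ≤ ∫⁻ θ in Ioo (-Real.pi) Real.pi,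
        ENNReal.ofReal (20 ^ c) * (h ((1 - x) + θ) + h ((1 - x) + -θ)) := by
        refine setLIntegral_mono' measurableSet_Ioo fun θ hθ => ?_
        have h1 := kernel_lower hx0 hx (abs_le.2 ⟨hθ.1.le, hθ.2.le⟩)
        have h2 : ENNReal.ofReal (‖1 - circleMap 0 x θ‖ ^ (-c)) ≤
            ENNReal.ofReal (20 ^ c) * ENNReal.ofReal (((1 - x) + |θ|) ^ (-c)) := by
          rw [← ENNReal.ofReal_mul (by positivity)]
          refine ENNReal.ofReal_le_ofReal ?_
          have h3 : 0 < (1 - x) + |θ| := by positivity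
          calc _ ≤ (((1 - x) + |θ|) / 20) ^ (-c) :=
                Real.rpow_le_rpow_of_nonpos (by positivity) h1 (by linarith)
            _ = _ := by
                rw [Real.div_rpow h3.le (by norm_num), Real.rpow_neg (x := 20) (by norm_num)]
                field_simp
        refine h2.trans ?_
        gcongr
        rw [← hval _ (abs_nonneg θ)]
        rcases abs_cases θ with ⟨h', _⟩ | ⟨h', _⟩ <;> rw [h']
        · exact le_self_add
        · exact le_add_self
    _ ≤ ∫⁻ θ, ENNReal.ofReal (20 ^ c) * (h ((1 - x) + θ) + h ((1 - x) + -θ)) :=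
        setLIntegral_le_lintegral _ _
    _ = ENNReal.ofReal (20 ^ c) * ((∫⁻ t, h t) + ∫⁻ t, h t) := by
        rw [lintegral_const_mul' _ _ ENNReal.ofReal_ne_top, lintegral_add_left (by fun_prop),
          lintegral_add_left_eq_self h, lintegral_neg_eq_self (fun t => h ((1 - x) + t)),
          lintegral_add_left_eq_self h]
    _ = _ := by
        rw [hint, ← ENNReal.ofReal_add (by positivity) (by positivity),
          ← ENNReal.ofReal_mul (by positivity)]
        congr 1
        ring

/-- The radial part of the Forelli–Rudin estimate, in the variable `x = 1 - r`; the integral is split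
at `x = y`. -/
lemma radial_bound {b c : ℝ} (hb : -1 < b) (hc : 2 + b < c) {y : ℝ} (hy : 0 < y) :
    ∫⁻ x in Ioo (0 : ℝ) 1, ENNReal.ofReal (x ^ b * (x + y) ^ (1 - c)) ≤
      ENNReal.ofReal ((1 / (b + 1) + 1 / (c - b - 2)) * y ^ (2 + b - c)) := by
  have hb1 : 0 < b + 1 := by linarith
  have hc1 : 0 < c - b - 2 := by linarith
  calc _ ≤ ∫⁻ x in Ioc 0 y ∪ Ioi y, ENNReal.ofReal (x ^ b * (x + y) ^ (1 - c)) := by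
        refine lintegral_mono_set fun x hx => ?_
        rcases le_or_gt x y with h | h
        · exact Or.inl ⟨hx.1, h⟩
        · exact Or.inr h
    _ ≤ (∫⁻ x in Ioc 0 y, ENNReal.ofReal (x ^ b * (x + y) ^ (1 - c))) +
        ∫⁻ x in Ioi y, ENNReal.ofReal (x ^ b * (x + y) ^ (1 - c)) := lintegral_union_le _ _ _
    _ ≤ (∫⁻ x in Ioc 0 y, ENNReal.ofReal (y ^ (1 - c)) * ENNReal.ofReal (x ^ b)) +
        ∫⁻ x in Ioi y, ENNReal.ofReal (x ^ (b + 1 - c)) := by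
        refine add_le_add (setLIntegral_mono' measurableSet_Ioc fun x hx => ?_)
          (setLIntegral_mono' measurableSet_Ioi fun x hx => ?_)
        · rw [← ENNReal.ofReal_mul (by positivity), mul_comm (x ^ b)]
          have := hx.1
          refine ENNReal.ofReal_le_ofReal ?_
          gcongr ?_ * _
          exact Real.rpow_le_rpow_of_nonpos hy (by linarith) (by linarith)
        · have hx0 : 0 < x := hy.trans hx
          refine ENNReal.ofReal_le_ofReal ?_
          rw [show b + 1 - c = b + (1 - c) by ring, Real.rpow_add hx0]
          gcongr _ * ?_
          exact Real.rpow_le_rpow_of_nonpos hx0 (by linarith) (by linarith)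
    _ = ENNReal.ofReal (y ^ (1 - c) * (y ^ (b + 1) / (b + 1))) +
        ENNReal.ofReal (y ^ (2 + b - c) / (c - b - 2)) := by
        congr 1
        · rw [lintegral_const_mul' _ _ ENNReal.ofReal_ne_top, ENNReal.ofReal_mul (by positivity),
            ← ofReal_integral_eq_lintegral_ofReal, ← intervalIntegral.integral_of_le hy.le,
            integral_rpow (Or.inl hb), Real.zero_rpow hb1.ne', sub_zero]
          · exact (intervalIntegrable_iff_integrableOn_Ioc_of_le hy.le).1
              (intervalIntegral.intervalIntegrable_rpow' hb)
          · exact (ae_restrict_mem measurableSet_Ioc).mono fun x hx =>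
              Real.rpow_nonneg hx.1.le _
        · rw [lintegral_Ioi_rpow_lt hy (by linarith)]
          congr 2 <;> ring_nf
    _ = _ := by
        rw [← ENNReal.ofReal_add (by positivity) (by positivity)]
        congr 1
        rw [← mul_div_assoc, ← Real.rpow_add hy]
        ring_nf

/-- The Forelli–Rudin estimate for the kernel `|1 - z w̄|^{-c}`, `c > 2 + b`. -/
lemma forelli_rudin {b c : ℝ} (hb : -1 < b) (hc : 2 + b < c) : ∃ C : ℝ, 0 < C ∧
    ∀ w ∈ ball (0 : ℂ) 1, ∫⁻ z in ball (0 : ℂ) 1,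
      ENNReal.ofReal (stdW b z * ‖1 - z * (starRingEnd ℂ) w‖ ^ (-c)) ∂dA ≤
        ENNReal.ofReal (C * (1 - ‖w‖ ^ 2) ^ (2 + b - c)) := by
  obtain ⟨Ca, hCa, hang⟩ := angular_bound (c := c) (by linarith)
  have hb1 : 0 < 1 + b := by linarith
  have hb2 : 0 < b + 1 := by linarith
  have hc1 : 0 < c - b - 2 := by linarith
  set K : ℝ := (1 + b) * Ca * 4 ^ |b| * 4 ^ |1 - c| with hK
  have hK0 : 0 < K := by positivity
  refine ⟨K * ((1 / (b + 1) + 1 / (c - b - 2)) * 4 ^ |2 + b - c|), by positivity,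
    fun w hw => ?_⟩
  rw [mem_ball_zero_iff] at hw
  set ρ := ‖w‖ with hρ
  have hρ0 : 0 ≤ ρ := norm_nonneg w
  have hy : 0 < 1 - ρ := by linarith
  -- Rotating `w` to the positive real axis.
  obtain ⟨u, hu⟩ : ∃ u : Circle, (ρ : ℂ) * u = w :=
    ⟨Circle.exp (arg w), by rw [Circle.coe_exp]; exact norm_mul_exp_arg_mul_I w⟩
  set G : ℂ → ℝ≥0∞ := (ball (0 : ℂ) 1).indicator fun z =>
    ENNReal.ofReal (stdW b z * ‖1 - z * ρ‖ ^ (-c)) with hG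
  have hGm : Measurable G := by
    refine Measurable.indicator ?_ measurableSet_ball
    unfold stdW
    fun_prop
  set F : ℂ → ℝ≥0∞ := (ball (0 : ℂ) 1).indicator fun z =>
    ENNReal.ofReal (stdW b z * ‖1 - z * (starRingEnd ℂ) w‖ ^ (-c)) with hF
  have hFm : Measurable F := by
    refine Measurable.indicator ?_ measurableSet_ball
    unfold stdW
    fun_prop
  have hFG : ∀ z, F (rotation u z) = G z := by
    intro z
    have e1 : ‖rotation u z‖ = ‖z‖ := (rotation u).norm_map z
    have e2 : (rotation u z) * (starRingEnd ℂ) w = z * ρ := by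
      have h1 : (u : ℂ) * (starRingEnd ℂ) (u : ℂ) = 1 := by
        rw [Complex.mul_conj, Complex.normSq_eq_norm_sq, Circle.norm_coe]; norm_num
      rw [rotation_apply, ← hu, map_mul, Complex.conj_ofReal]
      calc _ = ((u : ℂ) * (starRingEnd ℂ) (u : ℂ)) * (z * ρ) := by ring
        _ = _ := by rw [h1, one_mul]
    simp only [hF, hG, indicator, mem_ball_zero_iff, e1, e2, stdW]
  have hrot : ∫⁻ z, F z = ∫⁻ z, G z := by
    rw [← (rotation u).measurePreserving.lintegral_comp hFm]
    exact lintegral_congr hFG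
  set H : ℝ → ℝ≥0∞ := (Ioo (0 : ℝ) 1).indicator fun x =>
    ENNReal.ofReal (x ^ b * (x + (1 - ρ)) ^ (1 - c)) with hH
  have hinner : ∀ r ∈ Ioi (0 : ℝ), ∫⁻ θ in Ioo (-Real.pi) Real.pi,
      ENNReal.ofReal r * G (circleMap 0 r θ) ≤ ENNReal.ofReal K * H (1 - r) := by
    intro r (hr : 0 < r)
    have hn : ∀ θ, ‖circleMap 0 r θ‖ = r := fun θ => by simp [abs_of_pos hr]
    rcases lt_or_ge r 1 with hr1 | hr1
    · have h1r : 0 < 1 - r := by linarith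
      have h1r2 : 0 < 1 - r ^ 2 := by nlinarith
      have h1rρ : 0 < 1 - r * ρ := by nlinarith
      have e : ∀ θ, ENNReal.ofReal r * G (circleMap 0 r θ) =
          ENNReal.ofReal (r * ((1 + b) * (1 - r ^ 2) ^ b)) *
            ENNReal.ofReal (‖1 - circleMap 0 (r * ρ) θ‖ ^ (-c)) := by
        intro θ
        have e1 : circleMap 0 r θ * ρ = circleMap 0 (r * ρ) θ := by
          simp [circleMap]; ring
        rw [hG, indicator_of_mem (by rw [mem_ball_zero_iff, hn]; exact hr1), e1, stdW, hn,
          ← ENNReal.ofReal_mul hr.le, ← ENNReal.ofReal_mul (by positivity)]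
        congr 1
        ring
      simp only [e]
      rw [lintegral_const_mul' _ _ ENNReal.ofReal_ne_top, hH,
        indicator_of_mem (by constructor <;> linarith)]
      refine (mul_le_mul' le_rfl (hang (r * ρ) (by positivity) (by nlinarith))).trans ?_
      rw [← ENNReal.ofReal_mul (by positivity), ← ENNReal.ofReal_mul hK0.le]
      refine ENNReal.ofReal_le_ofReal ?_
      have c1 := rpow_comp b h1r2 h1r (by nlinarith) (by nlinarith)
      have c2 := rpow_comp (1 - c) h1rρ (show 0 < 1 - r + (1 - ρ) by linarith) (by nlinarith)
        (by nlinarith)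
      calc _ = r * ((1 + b) * Ca * ((1 - r ^ 2) ^ b * (1 - r * ρ) ^ (1 - c))) := by ring
        _ ≤ 1 * ((1 + b) * Ca * ((4 ^ |b| * (1 - r) ^ b) *
            (4 ^ |1 - c| * (1 - r + (1 - ρ)) ^ (1 - c)))) := by gcongr
        _ = _ := by rw [hK]; ring
    · have e : ∀ θ, ENNReal.ofReal r * G (circleMap 0 r θ) = 0 := by
        intro θ
        rw [hG, indicator_of_notMem (by rw [mem_ball_zero_iff, hn]; exact not_lt.2 hr1), mul_zero]
      simp [e]
  calc _ = (ENNReal.ofReal Real.pi)⁻¹ * ∫⁻ z, F z := by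
        rw [lintegral_dA, hF, lintegral_indicator measurableSet_ball]
    _ ≤ 1 * ∫⁻ z, F z := by
        gcongr
        rw [ENNReal.inv_le_one, ← ENNReal.ofReal_one]
        exact ENNReal.ofReal_le_ofReal (by linarith [Real.pi_gt_three])
    _ = ∫⁻ r in Ioi (0 : ℝ), ∫⁻ θ in Ioo (-Real.pi) Real.pi,
          ENNReal.ofReal r * G (circleMap 0 r θ) := by
        rw [one_mul, hrot, lintegral_polar hGm]
    _ ≤ ∫⁻ r in Ioi (0 : ℝ), ENNReal.ofReal K * H (1 - r) :=
        setLIntegral_mono' measurableSet_Ioi hinner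
    _ ≤ ∫⁻ r, ENNReal.ofReal K * H (1 - r) := setLIntegral_le_lintegral _ _
    _ = ENNReal.ofReal K * ∫⁻ x in Ioo (0 : ℝ) 1,
          ENNReal.ofReal (x ^ b * (x + (1 - ρ)) ^ (1 - c)) := by
        rw [lintegral_const_mul' _ _ ENNReal.ofReal_ne_top, lintegral_sub_left_eq_self H, hH,
          lintegral_indicator measurableSet_Ioo]
    _ ≤ ENNReal.ofReal K *
          ENNReal.ofReal ((1 / (b + 1) + 1 / (c - b - 2)) * (1 - ρ) ^ (2 + b - c)) := by
        gcongr
        exact radial_bound hb hc hy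
    _ ≤ _ := by
        rw [← ENNReal.ofReal_mul hK0.le]
        refine ENNReal.ofReal_le_ofReal ?_
        have c3 := rpow_comp (2 + b - c) hy (show 0 < 1 - ρ ^ 2 by nlinarith) (by nlinarith)
          (by nlinarith)
        calc _ ≤ K * ((1 / (b + 1) + 1 / (c - b - 2)) *
              (4 ^ |2 + b - c| * (1 - ρ ^ 2) ^ (2 + b - c))) := by gcongr
          _ = _ := by ring

/-! ### Boundedness of the Toeplitz operator from a weighted `L¹(μ)` -/

instance sFinite_dA : SFinite dA := by unfold dA; infer_instance

/-- A form of Minkowski's integral inequality: if `k(·, w)` has `L^q(W dτ)`-norm at most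
`C^{1/q} g(w)`, then `∫ Φ k(·, w) dν(w)` has norm at most `C^{1/q} ∫ Φ g dν`. It is Hölder's
inequality for the factorization `Φ k = (Φ g)^{1/q'} (Φ k^q g^{1-q})^{1/q}`, and Tonelli. -/
lemma minkowski_kernel {α β : Type*} [MeasurableSpace α] [MeasurableSpace β] {ν : Measure α}
    {τ : Measure β} [SFinite ν] [SFinite τ] {q q' : ℝ} (hq : q.HolderConjugate q')
    {Φ g : α → ℝ≥0∞} {W : β → ℝ≥0∞} {k : β → α → ℝ≥0∞} (hΦ : Measurable Φ) (hg : Measurable g)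
    (hW : Measurable W) (hk : Measurable (Function.uncurry k)) {C : ℝ≥0∞}
    (h : ∀ᵐ w ∂ν, g w ≠ 0 ∧ g w ≠ ∞ ∧ ∫⁻ z, W z * k z w ^ q ∂τ ≤ C * g w ^ q) :
    ∫⁻ z, W z * (∫⁻ w, Φ w * k z w ∂ν) ^ q ∂τ ≤ C * (∫⁻ w, Φ w * g w ∂ν) ^ q := by
  have hq0 : 0 < q := hq.pos
  have hq0' : 0 < q' := hq.symm.pos
  have hq1 : 0 < q - 1 := hq.sub_one_pos
  have hinv : 1 / q' + 1 / q = 1 := by have := hq.symm.inv_add_inv_eq_one; simpa using this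
  have hqq : q / q' = q - 1 := by
    have := hq.div_conj_eq_sub_one
    exact this
  set A := ∫⁻ w, Φ w * g w ∂ν with hA
  have hkz : ∀ z, Measurable (k z) := fun z => hk.of_uncurry_left
  have step : ∀ z, (∫⁻ w, Φ w * k z w ∂ν) ^ q ≤
      A ^ (q - 1) * ∫⁻ w, Φ w * (k z w ^ q * g w ^ (1 - q)) ∂ν := by
    intro z
    have h1 : ∫⁻ w, Φ w * k z w ∂ν ≤ A ^ (1 / q') *
        (∫⁻ w, Φ w * (k z w ^ q * g w ^ (1 - q)) ∂ν) ^ (1 / q) := by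
      have H := ENNReal.lintegral_mul_le_Lp_mul_Lq ν hq.symm
        (f := fun w => (Φ w * g w) ^ (1 / q'))
        (g := fun w => (Φ w * (k z w ^ q * g w ^ (1 - q))) ^ (1 / q))
        (by fun_prop) (by have := hkz z; fun_prop)
      have e1 : ∀ x : ℝ≥0∞, (x ^ (1 / q')) ^ q' = x := fun x => by
        rw [← ENNReal.rpow_mul, one_div_mul_cancel hq0'.ne', ENNReal.rpow_one]
      have e2 : ∀ x : ℝ≥0∞, (x ^ (1 / q)) ^ q = x := fun x => by
        rw [← ENNReal.rpow_mul, one_div_mul_cancel hq0.ne', ENNReal.rpow_one]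
      simp only [e1, e2] at H
      refine le_trans (le_of_eq (lintegral_congr_ae ?_)) H
      filter_upwards [h] with w ⟨hw0, hw1, _⟩
      simp only [Pi.mul_apply]
      rw [ENNReal.mul_rpow_of_nonneg _ _ (by positivity),
        ENNReal.mul_rpow_of_nonneg _ _ (by positivity),
        ENNReal.mul_rpow_of_nonneg _ _ (by positivity), ← ENNReal.rpow_mul, ← ENNReal.rpow_mul,
        mul_one_div_cancel hq0.ne', ENNReal.rpow_one]
      have e3 : Φ w ^ (1 / q') * Φ w ^ (1 / q) = Φ w := by
        rw [← ENNReal.rpow_add_of_nonneg _ _ (by positivity) (by positivity), hinv,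
          ENNReal.rpow_one]
      have e4 : g w ^ (1 / q') * g w ^ ((1 - q) * (1 / q)) = 1 := by
        rw [← ENNReal.rpow_add _ _ hw0 hw1]
        have : 1 / q' + (1 - q) * (1 / q) = 0 := by
          have : q * (1 / q) = 1 := mul_one_div_cancel hq0.ne'
          linarith
        rw [this, ENNReal.rpow_zero]
      calc Φ w * k z w = (Φ w ^ (1 / q') * Φ w ^ (1 / q)) *
            (g w ^ (1 / q') * g w ^ ((1 - q) * (1 / q))) * k z w := by rw [e3, e4, mul_one]
        _ = _ := by ring
    refine (ENNReal.rpow_le_rpow h1 hq0.le).trans (le_of_eq ?_)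
    rw [ENNReal.mul_rpow_of_nonneg _ _ hq0.le, ← ENNReal.rpow_mul, ← ENNReal.rpow_mul,
      one_div_mul_cancel hq0.ne', ENNReal.rpow_one, one_div_mul_eq_div, hqq]
  calc ∫⁻ z, W z * (∫⁻ w, Φ w * k z w ∂ν) ^ q ∂τ
      ≤ ∫⁻ z, A ^ (q - 1) * ∫⁻ w, W z * (Φ w * (k z w ^ q * g w ^ (1 - q))) ∂ν ∂τ := by
        refine lintegral_mono fun z => ?_
        have hz := hkz z
        calc _ ≤ W z * (A ^ (q - 1) * ∫⁻ w, Φ w * (k z w ^ q * g w ^ (1 - q)) ∂ν) := by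
              gcongr
              exact step z
          _ = _ := by
              rw [lintegral_const_mul _ (by fun_prop)]
              ring
    _ = A ^ (q - 1) * ∫⁻ w, ∫⁻ z, W z * (Φ w * (k z w ^ q * g w ^ (1 - q))) ∂τ ∂ν := by
        have hm : Measurable (Function.uncurry fun z w =>
            W z * (Φ w * (k z w ^ q * g w ^ (1 - q)))) := by
          have : Measurable fun x : β × α => k x.1 x.2 := hk
          unfold Function.uncurry
          fun_prop
        have hm2 : Measurable fun z =>
            ∫⁻ w, W z * (Φ w * (k z w ^ q * g w ^ (1 - q))) ∂ν := hm.lintegral_prod_right'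
        rw [lintegral_const_mul _ hm2, lintegral_lintegral_swap hm.aemeasurable]
    _ ≤ A ^ (q - 1) * ∫⁻ w, C * (Φ w * g w) ∂ν := by
        gcongr 1
        refine lintegral_mono_ae ?_
        filter_upwards [h] with w ⟨hw0, hw1, hw⟩
        have hkw : Measurable fun z => k z w := hk.of_uncurry_right
        calc ∫⁻ z, W z * (Φ w * (k z w ^ q * g w ^ (1 - q))) ∂τ
            = ∫⁻ z, (Φ w * g w ^ (1 - q)) * (W z * k z w ^ q) ∂τ := by
              refine lintegral_congr fun z => ?_
              ring
          _ = (Φ w * g w ^ (1 - q)) * ∫⁻ z, W z * k z w ^ q ∂τ :=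
              lintegral_const_mul _ (by fun_prop)
          _ ≤ (Φ w * g w ^ (1 - q)) * (C * g w ^ q) := by gcongr
          _ = C * (Φ w * (g w ^ (1 - q) * g w ^ q)) := by ring
          _ = _ := by
              rw [← ENNReal.rpow_add _ _ hw0 hw1]
              simp
    _ = _ := by
        rw [lintegral_const_mul _ (by fun_prop), ← hA, mul_left_comm]
        congr 1
        nth_rewrite 2 [← ENNReal.rpow_one A]
        rw [← ENNReal.rpow_add_of_nonneg _ _ hq1.le zero_le_one]
        congr 1
        ring

/-- Minkowski's inequality with the Forelli–Rudin estimate bounds `T_{μ,b} f` in `L^q` by a weighted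
`L¹(μ)` norm of `f`. The Bochner integral in `Toep` is `0` when it diverges, which is harmless in an
upper bound. -/
lemma toep_norm_le {q q' b : ℝ} (hq : q.HolderConjugate q') (hb : -1 < b) : ∃ C : ℝ, 0 < C ∧
    ∀ (μ : Measure ℂ) [SFinite μ] (f : ℂ → ℂ), DifferentiableOn ℂ f (ball 0 1) →
    wnorm q b (Toep μ b f) ≤ ENNReal.ofReal C *
      ∫⁻ w in ball (0 : ℂ) 1, ENNReal.ofReal (‖f w‖ * (1 - ‖w‖ ^ 2) ^ (-((b + 2) / q'))) ∂μ := by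
  classical
  have hq0 : 0 < q := hq.pos
  have hq1 : 1 < q := hq.lt
  have hb1 : 0 < 1 + b := by linarith
  obtain ⟨C, hC, hFR⟩ := forelli_rudin (b := b) (c := (2 + b) * q) hb (by nlinarith)
  refine ⟨C ^ (1 / q), by positivity, fun μ _ f hf => ?_⟩
  set Φ : ℂ → ℝ≥0∞ := (ball (0 : ℂ) 1).piecewise (fun w => ENNReal.ofReal ‖f w‖) 0 with hΦ
  have hΦm : Measurable Φ := by
    refine ContinuousOn.measurable_piecewise ?_ continuousOn_const measurableSet_ball
    exact ENNReal.continuous_ofReal.comp_continuousOn hf.continuousOn.norm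
  have hΦv : ∀ w ∈ ball (0 : ℂ) 1, Φ w = ENNReal.ofReal ‖f w‖ :=
    fun w hw => piecewise_eq_of_mem _ _ _ hw
  set g : ℂ → ℝ≥0∞ := fun w => ENNReal.ofReal ((1 - ‖w‖ ^ 2) ^ (-((b + 2) / q'))) with hg
  set k : ℂ → ℂ → ℝ≥0∞ := fun z w =>
    ENNReal.ofReal (‖1 - z * (starRingEnd ℂ) w‖ ^ (-(2 + b))) with hk
  set W : ℂ → ℝ≥0∞ := fun z => ENNReal.ofReal (stdW b z) with hW
  have hWm : Measurable W := by rw [hW]; unfold stdW; fun_prop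
  have hypos : ∀ w ∈ ball (0 : ℂ) 1, 0 < 1 - ‖w‖ ^ 2 := fun w hw => by
    have := mem_ball_zero_iff.1 hw
    nlinarith [norm_nonneg w]
  have hexp : (b + 2) / q' * q = (2 + b) * q - (2 + b) := by
    have : q / q' = q - 1 := hq.div_conj_eq_sub_one
    rw [div_mul_eq_mul_div, mul_div_assoc, this]
    ring
  have key := minkowski_kernel (ν := μ.restrict (ball 0 1)) (τ := dA.restrict (ball 0 1)) hq
    (Φ := Φ) (g := g) (W := W) (k := k) hΦm (by fun_prop) hWm
    (by simp only [hk]; fun_prop) (C := ENNReal.ofReal C) (by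
      filter_upwards [ae_restrict_mem measurableSet_ball] with w hw
      have hy := hypos w hw
      refine ⟨by simp only [hg, ne_eq, ENNReal.ofReal_eq_zero, not_le]; positivity,
        ENNReal.ofReal_ne_top, ?_⟩
      calc _ = ∫⁻ z in ball (0 : ℂ) 1,
            ENNReal.ofReal (stdW b z * ‖1 - z * (starRingEnd ℂ) w‖ ^ (-((2 + b) * q))) ∂dA := by
            refine setLIntegral_congr_fun measurableSet_ball fun z hz => ?_
            have hz1 := hypos z hz
            simp only [hW, hk]
            rw [ENNReal.ofReal_rpow_of_nonneg (by positivity) hq0.le,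
              ← Real.rpow_mul (norm_nonneg _), neg_mul, ← ENNReal.ofReal_mul]
            unfold stdW
            positivity
        _ ≤ _ := hFR w hw
        _ = _ := by
            simp only [hg]
            rw [ENNReal.ofReal_rpow_of_nonneg (by positivity) hq0.le, ← Real.rpow_mul hy.le,
              ← ENNReal.ofReal_mul hC.le, neg_mul, hexp]
            ring_nf)
  have hI : ∫⁻ w in ball (0 : ℂ) 1, ENNReal.ofReal (‖f w‖ * (1 - ‖w‖ ^ 2) ^ (-((b + 2) / q'))) ∂μ
      = ∫⁻ w in ball (0 : ℂ) 1, Φ w * g w ∂μ := by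
    refine setLIntegral_congr_fun measurableSet_ball fun w hw => ?_
    rw [hΦv w hw, hg, ENNReal.ofReal_mul (norm_nonneg _)]
  have hT : ∫⁻ z in ball (0 : ℂ) 1, ENNReal.ofReal (‖Toep μ b f z‖ ^ q * stdW b z) ∂dA ≤
      ∫⁻ z in ball (0 : ℂ) 1, W z * (∫⁻ w in ball (0 : ℂ) 1, Φ w * k z w ∂μ) ^ q ∂dA := by
    refine setLIntegral_mono' measurableSet_ball fun z hz => ?_
    rw [ENNReal.ofReal_mul (by positivity), mul_comm,
      ← ENNReal.ofReal_rpow_of_nonneg (norm_nonneg _) hq0.le]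
    refine mul_le_mul' le_rfl (ENNReal.rpow_le_rpow ?_ hq0.le)
    rw [ofReal_norm, Toep]
    refine (enorm_integral_le_lintegral_enorm _).trans (le_of_eq ?_)
    refine setLIntegral_congr_fun measurableSet_ball fun w hw => ?_
    simp only [hk]
    rw [hΦv w hw, ← ofReal_norm, norm_div, Complex.norm_cpow_real,
      Real.rpow_neg (norm_nonneg _), ← ENNReal.ofReal_mul (norm_nonneg _), div_eq_mul_inv]
  rw [hI, wnorm]
  refine (ENNReal.rpow_le_rpow (hT.trans key) (by positivity)).trans (le_of_eq ?_)
  rw [ENNReal.mul_rpow_of_nonneg _ _ (by positivity), ← ENNReal.rpow_mul,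
    mul_one_div_cancel hq0.ne', ENNReal.rpow_one, ENNReal.ofReal_rpow_of_pos hC]

/-- On `D(z,r)` the quantities `1 - |z|²`, `1 - |w|²` and `|1 - z̄ w|` are comparable. -/
lemma pD_comp {z w : ℂ} {r : ℝ} (hz : z ∈ ball (0 : ℂ) 1) (hw : w ∈ pD z r) :
    ‖1 - (starRingEnd ℂ) z * w‖ * (1 - r) ≤ 1 - ‖z‖ ^ 2 ∧
      ‖1 - (starRingEnd ℂ) z * w‖ * (1 - r) ≤ 1 - ‖w‖ ^ 2 ∧
      1 - ‖z‖ ≤ ‖1 - (starRingEnd ℂ) z * w‖ ∧ 1 - ‖w‖ ≤ ‖1 - (starRingEnd ℂ) z * w‖ := by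
  obtain ⟨hwb, hwr⟩ := hw
  rw [mem_ball_zero_iff] at hz hwb
  have hz0 := norm_nonneg z
  have hw0 := norm_nonneg w
  have h1 : 1 - ‖z‖ * ‖w‖ ≤ ‖1 - (starRingEnd ℂ) z * w‖ := by
    have := norm_sub_norm_le (1 : ℂ) ((starRingEnd ℂ) z * w)
    rwa [norm_one, norm_mul, RCLike.norm_conj] at this
  have h2 : 0 < ‖1 - (starRingEnd ℂ) z * w‖ := by nlinarith
  have h3 : ‖z - w‖ < r * ‖1 - (starRingEnd ℂ) z * w‖ := by
    rwa [norm_div, div_lt_iff₀ h2] at hwr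
  have e : ∀ v : ℂ, ‖v‖ < 1 → ‖(1 : ℂ) - (starRingEnd ℂ) v * v‖ = 1 - ‖v‖ ^ 2 := by
    intro v hv
    rw [mul_comm, Complex.mul_conj, Complex.normSq_eq_norm_sq, ← Complex.ofReal_one,
      ← Complex.ofReal_sub, Complex.norm_real, Real.norm_of_nonneg]
    nlinarith [norm_nonneg v]
  refine ⟨?_, ?_, by nlinarith, by nlinarith⟩
  · have h4 : (1 : ℂ) - (starRingEnd ℂ) z * w =
        (1 - (starRingEnd ℂ) z * z) + (starRingEnd ℂ) z * (z - w) := by ring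
    have h5 := norm_add_le (1 - (starRingEnd ℂ) z * z) ((starRingEnd ℂ) z * (z - w))
    rw [← h4, e z hz, norm_mul, RCLike.norm_conj] at h5
    nlinarith [norm_nonneg (z - w)]
  · have h4 : (1 : ℂ) - (starRingEnd ℂ) z * w =
        (1 - (starRingEnd ℂ) w * w) - (starRingEnd ℂ) (z - w) * w := by rw [map_sub]; ring
    have h5 := norm_sub_le (1 - (starRingEnd ℂ) w * w) ((starRingEnd ℂ) (z - w) * w)
    rw [← h4, e w hwb, norm_mul, RCLike.norm_conj] at h5
    nlinarith [norm_nonneg (z - w)]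

lemma near_mem_pD {w z : ℂ} (hw : w ∈ ball (0 : ℂ) 1) (hz : z ∈ ball w ((1 - ‖w‖) / 4)) :
    w ∈ pD z (1 / 2) := by
  have hzb := (near_comp hw hz).1
  refine ⟨hw, ?_⟩
  rw [mem_ball_zero_iff] at hw hzb
  rw [mem_ball, dist_eq_norm] at hz
  have h1 : 1 - ‖z‖ * ‖w‖ ≤ ‖1 - (starRingEnd ℂ) z * w‖ := by
    have := norm_sub_norm_le (1 : ℂ) ((starRingEnd ℂ) z * w)
    rwa [norm_one, norm_mul, RCLike.norm_conj] at this
  have h0 : ‖z‖ * ‖w‖ ≤ ‖w‖ := by nlinarith [norm_nonneg w]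
  have h2 : 0 < ‖1 - (starRingEnd ℂ) z * w‖ := by linarith
  rw [norm_div, div_lt_iff₀ h2]
  linarith

/-! ### Carleson embedding and sufficiency -/

/-- A Carleson embedding. Since `p ≤ 1`, one has `|f| = |f|^{1-p} |f|^p`, where the first factor is
controlled pointwise and the second by area averages; Tonelli then turns the integral against `μ`
into an area integral of `μ(D(z, 1/2))`. -/
lemma carleson_embedding {p a s₂ : ℝ} (hp : 0 < p) (hp1 : p ≤ 1) (ha : -1 < a) :
    ∃ C : ℝ, 0 < C ∧ ∀ (μ : Measure ℂ) [SFinite μ] (ε : ℝ), 0 < ε →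
      (∀ z ∈ ball (0 : ℂ) 1,
        μ (pD z (1 / 2)) ≤ ENNReal.ofReal (ε * (1 - ‖z‖ ^ 2) ^ ((a + 2) / p + s₂))) →
      ∀ f : ℂ → ℂ, DifferentiableOn ℂ f (ball 0 1) → wnorm p a f ≠ ∞ →
      ∫⁻ w in ball (0 : ℂ) 1, ENNReal.ofReal (‖f w‖ * (1 - ‖w‖ ^ 2) ^ (-s₂)) ∂μ ≤
        ENNReal.ofReal (C * ε) * wnorm p a f := by
  classical
  obtain ⟨C₁, hC₁, h₁⟩ := pointwise_growth hp ha
  obtain ⟨C₂, hC₂, h₂⟩ := submean_weight hp ha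
  set s : ℝ := (a + 2) / p + s₂ with hs
  set K : ℝ := 4 ^ |-s| with hK
  have hKpos : 0 < K := by positivity
  refine ⟨C₁ ^ (1 - p) * C₂ * K, by positivity, fun μ _ ε hε hμ f hf hfin => ?_⟩
  have hypos : ∀ w ∈ ball (0 : ℂ) 1, 0 < 1 - ‖w‖ ^ 2 := fun w hw => by
    have := mem_ball_zero_iff.1 hw
    nlinarith [norm_nonneg w]
  set n : ℝ := (wnorm p a f).toReal with hn
  have hn0 : 0 ≤ n := ENNReal.toReal_nonneg
  have hwn : wnorm p a f = ENNReal.ofReal n := (ENNReal.ofReal_toReal hfin).symm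
  set c : ℝ := (C₁ * n) ^ (1 - p) * C₂ * K with hc
  have hc0 : 0 ≤ c := by positivity
  set Ψ : ℂ → ℝ≥0∞ := (ball (0 : ℂ) 1).piecewise
    (fun z => ENNReal.ofReal (‖f z‖ ^ p * stdW a z)) 0 with hΨ
  have hΨm : Measurable Ψ := by
    refine ContinuousOn.measurable_piecewise ?_ continuousOn_const measurableSet_ball
    refine ENNReal.continuous_ofReal.comp_continuousOn ?_
    refine (hf.continuousOn.norm.rpow_const fun _ _ => Or.inr hp.le).mul ?_
    unfold stdW
    refine continuousOn_const.mul (ContinuousOn.rpow_const (by fun_prop) fun z hz => Or.inl ?_)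
    exact (hypos z hz).ne'
  have hΨv : ∀ w ∈ ball (0 : ℂ) 1, Ψ w = ENNReal.ofReal (‖f w‖ ^ p * stdW a w) :=
    fun w hw => piecewise_eq_of_mem _ _ _ hw
  have hΨ0 : ∀ w ∉ ball (0 : ℂ) 1, Ψ w = 0 :=
    fun w hw => piecewise_eq_of_notMem _ _ _ hw
  have hΨint : ∫⁻ z, Ψ z ∂dA = ENNReal.ofReal (n ^ p) := by
    have e : ∫⁻ z, Ψ z ∂dA =
        ∫⁻ z in ball (0 : ℂ) 1, ENNReal.ofReal (‖f z‖ ^ p * stdW a z) ∂dA := by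
      rw [← lintegral_indicator measurableSet_ball]
      refine lintegral_congr fun z => ?_
      by_cases hz : z ∈ ball (0 : ℂ) 1
      · rw [hΨv z hz, indicator_of_mem hz]
      · rw [hΨ0 z hz, indicator_of_notMem hz]
    rw [e, ← ENNReal.ofReal_rpow_of_nonneg hn0 hp.le, ← hwn, wnorm, ← ENNReal.rpow_mul,
      one_div_mul_cancel hp.ne', ENNReal.rpow_one]
  set S : Set (ℂ × ℂ) := {x | ‖x.1‖ < 1 ∧ dist x.2 x.1 < (1 - ‖x.1‖) / 4} with hS
  have hSm : MeasurableSet S := by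
    have o₁ : IsOpen {x : ℂ × ℂ | ‖x.1‖ < 1} := isOpen_lt (by fun_prop) (by fun_prop)
    have o₂ : IsOpen {x : ℂ × ℂ | dist x.2 x.1 < (1 - ‖x.1‖) / 4} :=
      isOpen_lt (by fun_prop) (by fun_prop)
    exact (o₁.inter o₂).measurableSet
  set V : ℂ → ℝ≥0∞ := fun z => ENNReal.ofReal ((1 - ‖z‖ ^ 2) ^ (-s)) with hV
  have hVm : Measurable V := by rw [hV]; fun_prop
  have hSi : Measurable fun x : ℂ × ℂ => S.indicator (1 : ℂ × ℂ → ℝ≥0∞) x :=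
    measurable_one.indicator hSm
  have hSw : ∀ w : ℂ, Measurable fun z => S.indicator (1 : ℂ × ℂ → ℝ≥0∞) (w, z) :=
    fun w => hSi.comp (by fun_prop)
  have hSz : ∀ z : ℂ, Measurable fun w => S.indicator (1 : ℂ × ℂ → ℝ≥0∞) (w, z) :=
    fun z => hSi.comp (by fun_prop)
  have step : ∀ w ∈ ball (0 : ℂ) 1, ENNReal.ofReal (‖f w‖ * (1 - ‖w‖ ^ 2) ^ (-s₂)) ≤
      ENNReal.ofReal c * ∫⁻ z, S.indicator 1 (w, z) * (V z * Ψ z) ∂dA := by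
    intro w hw
    have hy := hypos w hw
    set y := 1 - ‖w‖ ^ 2 with hydef
    have hu0 : 0 ≤ ‖f w‖ * y ^ ((a + 2) / p) := by positivity
    set u := ‖f w‖ * y ^ ((a + 2) / p) with hu
    have hu1 : u ≤ C₁ * n := by
      have := h₁ f hf w hw
      rw [hwn, ← ENNReal.ofReal_mul hC₁.le] at this
      exact (ENNReal.ofReal_le_ofReal_iff (by positivity)).1 this
    have hup : u ^ p = ‖f w‖ ^ p * y ^ (a + 2) := by
      rw [hu, Real.mul_rpow (norm_nonneg _) (by positivity), ← Real.rpow_mul hy.le,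
        div_mul_cancel₀ _ hp.ne']
    have e1 : ‖f w‖ * y ^ (-s₂) = u * y ^ (-s) := by
      rw [hu, mul_assoc, ← Real.rpow_add hy, hs]
      congr 2
      ring
    have e2 : u ≤ (C₁ * n) ^ (1 - p) * u ^ p := by
      calc u = u ^ (1 - p) * u ^ p := by
            rcases hu0.eq_or_lt with h | h
            · rw [← h, Real.zero_rpow hp.ne', mul_zero]
            · rw [← Real.rpow_add h]; simp
        _ ≤ _ := by
            gcongr
    calc ENNReal.ofReal (‖f w‖ * y ^ (-s₂))
        ≤ ENNReal.ofReal ((C₁ * n) ^ (1 - p) * (y ^ (-s) * (‖f w‖ ^ p * y ^ (a + 2)))) := by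
          rw [e1, ← hup]
          refine ENNReal.ofReal_le_ofReal ?_
          have : 0 ≤ y ^ (-s) := by positivity
          nlinarith
      _ = ENNReal.ofReal ((C₁ * n) ^ (1 - p)) *
          (ENNReal.ofReal (y ^ (-s)) * ENNReal.ofReal (‖f w‖ ^ p * y ^ (a + 2))) := by
          rw [ENNReal.ofReal_mul (by positivity), ENNReal.ofReal_mul (by positivity)]
      _ ≤ ENNReal.ofReal ((C₁ * n) ^ (1 - p)) * (ENNReal.ofReal (y ^ (-s)) *
          (ENNReal.ofReal C₂ * ∫⁻ z in ball w ((1 - ‖w‖) / 4),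
            ENNReal.ofReal (‖f z‖ ^ p * stdW a z) ∂dA)) := by
          gcongr
          exact h₂ f hf w hw
      _ = ENNReal.ofReal ((C₁ * n) ^ (1 - p)) * ENNReal.ofReal C₂ *
          ∫⁻ z in ball w ((1 - ‖w‖) / 4), ENNReal.ofReal (y ^ (-s)) *
            ENNReal.ofReal (‖f z‖ ^ p * stdW a z) ∂dA := by
          rw [lintegral_const_mul' _ _ ENNReal.ofReal_ne_top]
          ring
      _ ≤ ENNReal.ofReal ((C₁ * n) ^ (1 - p)) * ENNReal.ofReal C₂ *
          ∫⁻ z in ball w ((1 - ‖w‖) / 4), ENNReal.ofReal K * (V z * Ψ z) ∂dA := by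
          gcongr 1
          refine setLIntegral_mono' measurableSet_ball fun z hz => ?_
          obtain ⟨hzb, _, hyz, h3, h4⟩ := near_comp hw hz
          rw [hΨv z hzb, ← mul_assoc, hV, ← ENNReal.ofReal_mul hKpos.le]
          gcongr
          exact rpow_comp (-s) hy hyz h3 h4
      _ = ENNReal.ofReal c * ∫⁻ z in ball w ((1 - ‖w‖) / 4), V z * Ψ z ∂dA := by
          rw [lintegral_const_mul _ (by fun_prop), hc, ENNReal.ofReal_mul (by positivity),
            ENNReal.ofReal_mul (by positivity)]
          ring
      _ = _ := by
          rw [← lintegral_indicator measurableSet_ball]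
          congr 1
          refine lintegral_congr fun z => ?_
          by_cases hz : z ∈ ball w ((1 - ‖w‖) / 4)
          · have : (w, z) ∈ S := ⟨mem_ball_zero_iff.1 hw, hz⟩
            rw [indicator_of_mem hz, indicator_of_mem this, Pi.one_apply, one_mul]
          · have : (w, z) ∉ S := fun h => hz h.2
            rw [indicator_of_notMem hz, indicator_of_notMem this, zero_mul]
  have inner : ∀ z, ∫⁻ w in ball (0 : ℂ) 1, S.indicator 1 (w, z) * (V z * Ψ z) ∂μ ≤
      ENNReal.ofReal ε * Ψ z := by
    intro z
    rw [lintegral_mul_const _ (hSz z)]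
    by_cases hz : z ∈ ball (0 : ℂ) 1
    · have hy := hypos z hz
      have hb : ∫⁻ w in ball (0 : ℂ) 1, S.indicator 1 (w, z) ∂μ ≤
          ENNReal.ofReal (ε * (1 - ‖z‖ ^ 2) ^ s) := by
        have hm : MeasurableSet {w | (w, z) ∈ S} := hSm.preimage (f := fun w => (w, z)) (by fun_prop)
        calc ∫⁻ w in ball (0 : ℂ) 1, S.indicator 1 (w, z) ∂μ
            ≤ ∫⁻ w, S.indicator 1 (w, z) ∂μ := setLIntegral_le_lintegral _ _
          _ = μ {w | (w, z) ∈ S} := by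
              rw [← lintegral_indicator_one hm]
              rfl
          _ ≤ μ (pD z (1 / 2)) := measure_mono fun w hw =>
              near_mem_pD (mem_ball_zero_iff.2 hw.1) hw.2
          _ ≤ _ := hμ z hz
      calc _ ≤ ENNReal.ofReal (ε * (1 - ‖z‖ ^ 2) ^ s) * (V z * Ψ z) := by gcongr
        _ = _ := by
          rw [← mul_assoc, hV, ← ENNReal.ofReal_mul (by positivity), mul_assoc,
            ← Real.rpow_add hy]
          simp
    · simp [hΨ0 z hz]
  calc ∫⁻ w in ball (0 : ℂ) 1, ENNReal.ofReal (‖f w‖ * (1 - ‖w‖ ^ 2) ^ (-s₂)) ∂μ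
      ≤ ∫⁻ w in ball (0 : ℂ) 1,
          ENNReal.ofReal c * ∫⁻ z, S.indicator 1 (w, z) * (V z * Ψ z) ∂dA ∂μ :=
        setLIntegral_mono' measurableSet_ball step
    _ = ENNReal.ofReal c * ∫⁻ z, ∫⁻ w in ball (0 : ℂ) 1,
          S.indicator 1 (w, z) * (V z * Ψ z) ∂μ ∂dA := by
        rw [lintegral_const_mul' _ _ ENNReal.ofReal_ne_top, lintegral_lintegral_swap]
        refine Measurable.aemeasurable ?_
        exact hSi.mul ((hVm.mul hΨm).comp measurable_snd)
    _ ≤ ENNReal.ofReal c * ∫⁻ z, ENNReal.ofReal ε * Ψ z ∂dA := by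
        gcongr with z
        exact inner z
    _ = _ := by
        rw [lintegral_const_mul _ hΨm, hΨint, hwn, ← ENNReal.ofReal_mul hε.le,
          ← ENNReal.ofReal_mul hc0, ← ENNReal.ofReal_mul (by positivity), hc,
          Real.mul_rpow hC₁.le hn0]
        congr 1
        have : n ^ (1 - p) * n ^ p = n := by
          rcases hn0.eq_or_lt with h | h
          · rw [← h, Real.zero_rpow hp.ne', mul_zero]
          · rw [← Real.rpow_add h]; simp
        linear_combination (C₁ ^ (1 - p) * C₂ * K * ε) * this

/-- Sufficiency. On the compact disk `|w| ≤ ρ` the functions tend to `0` uniformly; off it, `μ`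
is a Carleson measure with small constant. -/
lemma tendsto_wnorm_toep {p q q' a b : ℝ} (hp : 0 < p) (hp1 : p ≤ 1) (hq : q.HolderConjugate q')
    (hb : -1 < b) (ha : -1 < a) {μ : Measure ℂ} [IsFiniteMeasure μ]
    (h : ∀ ε > (0 : ℝ), ∃ δ ∈ Set.Ioo (0 : ℝ) 1, ∀ z ∈ ball (0 : ℂ) 1, δ < ‖z‖ →
      μ (pD z (1 / 2)) ≤ ENNReal.ofReal (ε * (1 - ‖z‖ ^ 2) ^ ((a + 2) / p + (b + 2) / q')))
    {f : ℕ → ℂ → ℂ} (hf : ∀ n, DifferentiableOn ℂ (f n) (ball (0 : ℂ) 1)) {M : ℝ≥0}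
    (hM : ∀ n, wnorm p a (f n) ≤ M)
    (hlim : TendstoLocallyUniformlyOn f (fun _ => 0) atTop (ball (0 : ℂ) 1)) :
    Tendsto (fun n => wnorm q b (Toep μ b (f n))) atTop (𝓝 0) := by
  have hq'0 : 0 < q' := hq.symm.pos
  obtain ⟨C₁, hC₁, h₁⟩ := toep_norm_le hq hb
  obtain ⟨C₂, hC₂, h₂⟩ := carleson_embedding (s₂ := (b + 2) / q') hp hp1 ha
  set s₂ : ℝ := (b + 2) / q' with hs₂
  have hs₂0 : 0 ≤ s₂ := div_nonneg (by linarith) hq'0.le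
  rw [ENNReal.tendsto_nhds_zero]
  intro e' he'
  obtain ⟨e, he, hee'⟩ := ENNReal.lt_iff_exists_nnreal_btwn.1 he'
  have he0 : (0 : ℝ) < e := by exact_mod_cast he
  have hM0 : (0 : ℝ) ≤ M := M.2
  set m : ℝ := (μ univ).toReal with hm
  have hm0 : 0 ≤ m := ENNReal.toReal_nonneg
  have hμu : μ univ = ENNReal.ofReal m := (ENNReal.ofReal_toReal (measure_ne_top _ _)).symm
  set ε : ℝ := e / (2 * C₁ * C₂ * (M + 1)) with hε
  have hε0 : 0 < ε := by positivity
  set η : ℝ := e / (2 * C₁ * (m + 1)) with hη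
  have hη0 : 0 < η := by positivity
  obtain ⟨δ, ⟨hδ0, hδ1⟩, hδ⟩ := h ε hε0
  -- `ρ` is so close to `1` that `D(z, 1/2)` stays in `|w| ≤ ρ` when `|z| ≤ δ`.
  set ρ : ℝ := 1 - (1 - δ) / 8 with hρ
  have hρ0 : 0 < ρ := by rw [hρ]; linarith
  have hρ1 : ρ < 1 := by rw [hρ]; linarith
  set K : Set ℂ := closedBall 0 ρ with hK
  have hKb : K ⊆ ball 0 1 := closedBall_subset_ball hρ1
  have hρy : 0 < 1 - ρ ^ 2 := by nlinarith
  set B : ℝ := (1 - ρ ^ 2) ^ (-s₂) with hB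
  have hB0 : 0 < B := by positivity
  have hunif := (tendstoLocallyUniformlyOn_iff_forall_isCompact isOpen_ball).1 hlim K hKb
    (isCompact_closedBall _ _)
  filter_upwards [Metric.tendstoUniformlyOn_iff.1 hunif (η / B) (by positivity)] with n hn
  have hout : ∫⁻ w in ball (0 : ℂ) 1, ENNReal.ofReal (‖f n w‖ * (1 - ‖w‖ ^ 2) ^ (-s₂))
      ∂(μ.restrict Kᶜ) ≤ ENNReal.ofReal (C₂ * ε * M) := by
    refine (h₂ (μ.restrict Kᶜ) ε hε0 (fun z hz => ?_) (f n) (hf n)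
      ((hM n).trans_lt ENNReal.coe_lt_top).ne).trans ?_
    · rcases lt_or_ge δ ‖z‖ with hzδ | hzδ
      · exact (Measure.restrict_apply_le _ _).trans (hδ z hz hzδ)
      · have hempty : pD z (1 / 2) ∩ Kᶜ = ∅ := by
          refine eq_empty_of_forall_notMem fun w ⟨hw, hwK⟩ => ?_
          obtain ⟨-, h3, h4, -⟩ := pD_comp hz hw
          have hw1 := mem_ball_zero_iff.1 hw.1
          have hwρ : ρ < ‖w‖ := by simpa [hK] using hwK
          rw [hρ] at hwρ
          nlinarith [norm_nonneg w]
        have : (μ.restrict Kᶜ) (pD z (1 / 2)) = 0 := by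
          rw [Measure.restrict_apply' isClosed_closedBall.measurableSet.compl, hempty,
            measure_empty]
        rw [this]
        exact bot_le
    · rw [ENNReal.ofReal_mul (p := C₂ * ε) (by positivity), ENNReal.ofReal_coe_nnreal]
      gcongr
      exact hM n
  have hin : ∫⁻ w in ball (0 : ℂ) 1, ENNReal.ofReal (‖f n w‖ * (1 - ‖w‖ ^ 2) ^ (-s₂))
      ∂(μ.restrict K) ≤ ENNReal.ofReal (η * m) := by
    have hmono : (μ.restrict K).restrict (ball 0 1) ≤ μ.restrict K := Measure.restrict_le_self
    refine (lintegral_mono' hmono le_rfl).trans ?_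
    calc ∫⁻ w in K, ENNReal.ofReal (‖f n w‖ * (1 - ‖w‖ ^ 2) ^ (-s₂)) ∂μ
        ≤ ∫⁻ w in K, ENNReal.ofReal η ∂μ := by
          refine setLIntegral_mono' isClosed_closedBall.measurableSet fun w hw => ?_
          refine ENNReal.ofReal_le_ofReal ?_
          have h5 := hn w hw
          rw [dist_zero_left] at h5
          have h6 : ‖w‖ ≤ ρ := by simpa [hK] using hw
          have h7 : (1 - ‖w‖ ^ 2) ^ (-s₂) ≤ B :=
            Real.rpow_le_rpow_of_nonpos hρy (by nlinarith [norm_nonneg w]) (by linarith)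
          calc _ ≤ η / B * B := mul_le_mul h5.le h7
                (Real.rpow_nonneg (by nlinarith [norm_nonneg w]) _) (by positivity)
            _ = η := div_mul_cancel₀ _ hB0.ne'
      _ ≤ ENNReal.ofReal η * μ univ := by
          rw [setLIntegral_const]
          gcongr
          exact subset_univ _
      _ = _ := by rw [hμu, ENNReal.ofReal_mul hη0.le]
  have hsplit : ∫⁻ w in ball (0 : ℂ) 1, ENNReal.ofReal (‖f n w‖ * (1 - ‖w‖ ^ 2) ^ (-s₂)) ∂μ ≤
      ENNReal.ofReal (C₂ * ε * M + η * m) := by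
    have e1 : μ = μ.restrict K + μ.restrict Kᶜ :=
      (Measure.restrict_add_restrict_compl isClosed_closedBall.measurableSet).symm
    nth_rewrite 1 [e1]
    rw [Measure.restrict_add, lintegral_add_measure, add_comm,
      ENNReal.ofReal_add (by positivity) (by positivity)]
    exact add_le_add hout hin
  refine le_trans ?_ hee'.le
  calc wnorm q b (Toep μ b (f n))
      ≤ ENNReal.ofReal C₁ * ENNReal.ofReal (C₂ * ε * M + η * m) :=
        (h₁ μ (f n) (hf n)).trans (by gcongr)
    _ = ENNReal.ofReal (C₁ * (C₂ * ε * M + η * m)) := (ENNReal.ofReal_mul hC₁.le).symm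
    _ ≤ ENNReal.ofReal e := by
        refine ENNReal.ofReal_le_ofReal ?_
        have e2 : C₁ * (C₂ * ε * M) = e / 2 * (M / (M + 1)) := by rw [hε]; field_simp
        have e3 : C₁ * (η * m) = e / 2 * (m / (m + 1)) := by rw [hη]; field_simp
        have e4 : (M : ℝ) / (M + 1) ≤ 1 := by rw [div_le_one (by positivity)]; linarith
        have e5 : m / (m + 1) ≤ 1 := by rw [div_le_one (by positivity)]; linarith
        rw [mul_add, e2, e3]
        nlinarith
    _ = e := ENNReal.ofReal_coe_nnreal

/-! ### Derivatives of the Toeplitz operator applied to a function -/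

lemma one_sub_norm_le {z w : ℂ} (hw : w ∈ ball (0 : ℂ) 1) :
    1 - ‖z‖ ≤ ‖1 - z * (starRingEnd ℂ) w‖ := by
  rw [mem_ball_zero_iff] at hw
  have := norm_sub_norm_le (1 : ℂ) (z * (starRingEnd ℂ) w)
  rw [norm_one, norm_mul, RCLike.norm_conj] at this
  nlinarith [norm_nonneg z]

lemma one_sub_mem_slitPlane {z w : ℂ} (hz : z ∈ ball (0 : ℂ) 1) (hw : w ∈ ball (0 : ℂ) 1) :
    1 - z * (starRingEnd ℂ) w ∈ slitPlane := by
  rw [mem_ball_zero_iff] at hz hw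
  left
  have h1 : (z * (starRingEnd ℂ) w).re ≤ ‖z * (starRingEnd ℂ) w‖ := re_le_norm _
  rw [norm_mul, RCLike.norm_conj] at h1
  rw [sub_re, one_re]
  nlinarith [norm_nonneg z, norm_nonneg w]

/-- Up to a constant factor, the `j`-th derivative of `T_{μ,b} f`. -/
noncomputable def toepDer (μ : Measure ℂ) (b : ℝ) (f : ℂ → ℂ) (j : ℕ) (z : ℂ) : ℂ :=
  ∫ w in ball (0 : ℂ) 1, f w * (starRingEnd ℂ) w ^ j *
    (1 - z * (starRingEnd ℂ) w) ^ (-((2 + b + j : ℝ) : ℂ)) ∂μ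

lemma toepDer_zero (μ : Measure ℂ) (b : ℝ) (f : ℂ → ℂ) : toepDer μ b f 0 = Toep μ b f := by
  funext z
  simp only [toepDer, Toep, Nat.cast_zero, add_zero, pow_zero, mul_one, cpow_neg, div_eq_mul_inv]

lemma toepDer_continuousOn {f : ℂ → ℂ} (hf : ContinuousOn f (ball 0 1)) {z : ℂ}
    (hz : z ∈ ball (0 : ℂ) 1) (j : ℕ) (c : ℂ) :
    ContinuousOn (fun w => f w * (starRingEnd ℂ) w ^ j * (1 - z * (starRingEnd ℂ) w) ^ c)
      (ball 0 1) := by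
  have hc : Continuous fun w : ℂ => (starRingEnd ℂ) w := continuous_conj
  refine (hf.mul (by fun_prop)).mul ?_
  exact ContinuousOn.cpow_const (by fun_prop) fun w hw => one_sub_mem_slitPlane hz hw

lemma toepDer_bound {f : ℂ → ℂ} {A : ℝ} (hA : ∀ w ∈ ball (0 : ℂ) 1, ‖f w‖ ≤ A) {z : ℂ} {d c : ℝ}
    (hd : 0 < d) (hz : d ≤ 1 - ‖z‖) (hc : 0 ≤ c) (j : ℕ) {w : ℂ} (hw : w ∈ ball (0 : ℂ) 1) :
    ‖f w * (starRingEnd ℂ) w ^ j * (1 - z * (starRingEnd ℂ) w) ^ (-(c : ℂ))‖ ≤ A * d ^ (-c) := by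
  have h1 := hA w hw
  have h2 := hz.trans (one_sub_norm_le (z := z) hw)
  have hA0 : 0 ≤ A := (norm_nonneg _).trans h1
  rw [← Complex.ofReal_neg, norm_mul, norm_mul, norm_cpow_real, norm_pow, RCLike.norm_conj]
  have h3 : ‖w‖ ^ j ≤ 1 := pow_le_one₀ (norm_nonneg _) (mem_ball_zero_iff.1 hw).le
  have h4 := Real.rpow_le_rpow_of_nonpos hd h2 (neg_nonpos.2 hc)
  calc _ ≤ A * 1 * d ^ (-c) := by gcongr
    _ = _ := by ring

lemma hasDerivAt_toepDer {b : ℝ} (hb : -1 < b) (μ : Measure ℂ) [IsFiniteMeasure μ] {f : ℂ → ℂ}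
    (hf : ContinuousOn f (ball 0 1)) {A : ℝ} (hA : ∀ w ∈ ball (0 : ℂ) 1, ‖f w‖ ≤ A) (j : ℕ) {z : ℂ}
    (hz : z ∈ ball (0 : ℂ) 1) :
    HasDerivAt (toepDer μ b f j) ((2 + b + j : ℝ) * toepDer μ b f (j + 1) z) z := by
  have hz1 := mem_ball_zero_iff.1 hz
  set d : ℝ := (1 - ‖z‖) / 2 with hd
  have hd0 : 0 < d := by rw [hd]; linarith
  have hj : (0 : ℝ) ≤ j := j.cast_nonneg
  set c : ℝ := 2 + b + j with hc
  have hc0 : 0 < c := by linarith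
  have hnear : ∀ x ∈ ball z d, d ≤ 1 - ‖x‖ := by
    intro x hx
    rw [mem_ball, dist_eq_norm] at hx
    have := norm_sub_norm_le x z
    rw [hd] at hx ⊢
    linarith
  have hnear1 : ∀ x ∈ ball z d, x ∈ ball (0 : ℂ) 1 := fun x hx => by
    rw [mem_ball_zero_iff]
    linarith [hnear x hx]
  have hc' : (2 + b + (j + 1 : ℕ) : ℝ) = c + 1 := by rw [hc]; push_cast; ring
  have key := hasDerivAt_integral_of_dominated_loc_of_deriv_le (𝕜 := ℂ) (μ := μ.restrict (ball 0 1))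
    (F := fun x w => f w * (starRingEnd ℂ) w ^ j * (1 - x * (starRingEnd ℂ) w) ^ (-(c : ℂ)))
    (F' := fun x w => (c : ℂ) * (f w * (starRingEnd ℂ) w ^ (j + 1) *
      (1 - x * (starRingEnd ℂ) w) ^ (-((c + 1 : ℝ) : ℂ))))
    (x₀ := z) (s := ball z d) (bound := fun _ => c * (A * d ^ (-(c + 1))))
    (ball_mem_nhds z hd0) ?_ ?_ ?_ ?_ ?_ ?_
  · have h2 := key.2
    unfold toepDer
    rw [hc', ← integral_const_mul]
    exact h2
  · filter_upwards [ball_mem_nhds z hd0] with x hx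
    exact (toepDer_continuousOn hf (hnear1 x hx) j _).aestronglyMeasurable measurableSet_ball
  · refine Integrable.of_bound ((toepDer_continuousOn hf hz j _).aestronglyMeasurable
      measurableSet_ball) (A * d ^ (-c)) ?_
    filter_upwards [ae_restrict_mem measurableSet_ball] with w hw
    exact toepDer_bound hA hd0 (hnear z (mem_ball_self hd0)) hc0.le j hw
  · exact ((toepDer_continuousOn hf hz (j + 1) _).aestronglyMeasurable
      measurableSet_ball).const_mul _
  · filter_upwards [ae_restrict_mem measurableSet_ball] with w hw x hx
    rw [norm_mul, Complex.norm_real, Real.norm_of_nonneg hc0.le]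
    gcongr
    exact toepDer_bound hA hd0 (hnear x hx) (by linarith) (j + 1) hw
  · exact integrable_const _
  · filter_upwards [ae_restrict_mem measurableSet_ball] with w hw x hx
    have h1 : HasDerivAt (fun x : ℂ => 1 - x * (starRingEnd ℂ) w) (-(starRingEnd ℂ) w) x := by
      simpa using ((hasDerivAt_id x).mul_const ((starRingEnd ℂ) w)).const_sub 1
    have h2 := (h1.cpow_const (c := -(c : ℂ)) (one_sub_mem_slitPlane (hnear1 x hx) hw)).const_mul
      (f w * (starRingEnd ℂ) w ^ j)
    refine h2.congr_deriv ?_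
    have e : (-((c + 1 : ℝ) : ℂ)) = -(c : ℂ) - 1 := by push_cast; ring
    rw [e]
    ring

/-- Cauchy's estimate on discs comparable with the distance to the unit circle. -/
lemma deriv_growth {H : ℂ → ℂ} (hH : DifferentiableOn ℂ H (ball 0 1)) {c σ : ℝ} (hc : 0 ≤ c)
    (h : ∀ z ∈ ball (0 : ℂ) 1, ‖H z‖ ≤ c * (1 - ‖z‖ ^ 2) ^ (-σ)) {z : ℂ}
    (hz : z ∈ ball (0 : ℂ) 1) :
    ‖deriv H z‖ ≤ 16 * 4 ^ |-σ| * c * (1 - ‖z‖ ^ 2) ^ (-(σ + 1)) := by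
  have hz1 := mem_ball_zero_iff.1 hz
  have hz0 := norm_nonneg z
  set y := 1 - ‖z‖ ^ 2 with hy
  have hy0 : 0 < y := by nlinarith
  set R := (1 - ‖z‖) / 8 with hR
  have hR0 : 0 < R := by rw [hR]; linarith
  have hRy : y / 16 ≤ R := by rw [hR, hy]; nlinarith
  have hsub : closedBall z R ⊆ ball z ((1 - ‖z‖) / 4) :=
    closedBall_subset_ball (by rw [hR]; linarith)
  have hsub1 : closedBall z R ⊆ ball 0 1 := fun x hx => (near_comp hz (hsub hx)).1
  have hdc : DiffContOnCl ℂ H (ball z R) := by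
    refine (hH.mono ?_).diffContOnCl
    rw [closure_ball z hR0.ne']
    exact hsub1
  have hC : ∀ ζ ∈ sphere z R, ‖H ζ‖ ≤ c * (4 ^ |-σ| * y ^ (-σ)) := by
    intro ζ hζ
    obtain ⟨h1, h2, h3, h4, h5⟩ := near_comp hz (hsub (sphere_subset_closedBall hζ))
    refine (h ζ h1).trans ?_
    gcongr
    exact rpow_comp (-σ) h3 h2 h5 h4
  refine (norm_deriv_le_of_forall_mem_sphere_norm_le hR0 hdc hC).trans ?_
  calc _ ≤ c * (4 ^ |-σ| * y ^ (-σ)) / (y / 16) := by gcongr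
    _ = _ := by
      rw [neg_add, Real.rpow_add hy0, Real.rpow_neg_one]
      field_simp

/-- A bound on `‖T_{μ,b} f‖` in `L^q` controls the growth of all derivatives of `T_{μ,b} f`. -/
lemma toepDer_growth {q b : ℝ} (hq : 0 < q) (hb : -1 < b) (j : ℕ) : ∃ C : ℝ, 0 < C ∧
    ∀ (μ : Measure ℂ) [IsFiniteMeasure μ] (f : ℂ → ℂ) (A N : ℝ), ContinuousOn f (ball 0 1) →
      (∀ w ∈ ball (0 : ℂ) 1, ‖f w‖ ≤ A) → 0 ≤ N → wnorm q b (Toep μ b f) ≤ ENNReal.ofReal N →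
      ∀ z ∈ ball (0 : ℂ) 1,
        ‖toepDer μ b f j z‖ ≤ C * N * (1 - ‖z‖ ^ 2) ^ (-((b + 2) / q + j)) := by
  have hypos : ∀ w ∈ ball (0 : ℂ) 1, 0 < 1 - ‖w‖ ^ 2 := fun w hw => by
    have := mem_ball_zero_iff.1 hw
    nlinarith [norm_nonneg w]
  induction j with
  | zero =>
    obtain ⟨C, hC, h⟩ := pointwise_growth hq hb
    refine ⟨C, hC, fun μ _ f A N hf hA hN hT z hz => ?_⟩
    have hy := hypos z hz
    have hd : DifferentiableOn ℂ (Toep μ b f) (ball 0 1) := fun x hx => by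
      rw [← toepDer_zero]
      exact (hasDerivAt_toepDer hb μ hf hA 0 hx).differentiableAt.differentiableWithinAt
    have h1 := (h (Toep μ b f) hd z hz).trans (mul_le_mul_right hT (ENNReal.ofReal C))
    rw [← ENNReal.ofReal_mul hC.le, ENNReal.ofReal_le_ofReal_iff (by positivity)] at h1
    rw [toepDer_zero, Real.rpow_neg hy.le, ← div_eq_mul_inv, le_div_iff₀ (by positivity)]
    simpa using h1
  | succ j ih =>
    obtain ⟨C, hC, h⟩ := ih
    set σ : ℝ := (b + 2) / q + j with hσ
    have hc0 : (0 : ℝ) < 2 + b + j := by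
      have : (0 : ℝ) ≤ j := j.cast_nonneg
      linarith
    refine ⟨16 * 4 ^ |-σ| * C / (2 + b + j), by positivity, fun μ _ f A N hf hA hN hT z hz => ?_⟩
    have hd : DifferentiableOn ℂ (toepDer μ b f j) (ball 0 1) := fun x hx =>
      (hasDerivAt_toepDer hb μ hf hA j hx).differentiableAt.differentiableWithinAt
    have h1 := deriv_growth hd (by positivity) (h μ f A N hf hA hN hT) hz
    rw [(hasDerivAt_toepDer hb μ hf hA j hz).deriv, norm_mul, Complex.norm_real,
      Real.norm_of_nonneg hc0.le] at h1
    have e : (b + 2) / q + ((j + 1 : ℕ) : ℝ) = σ + 1 := by rw [hσ]; push_cast; ring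
    rw [e, div_mul_eq_mul_div, div_mul_eq_mul_div, le_div_iff₀ hc0]
    linarith

/-! ### Test functions and necessity -/

/-- The test function `w^k (1-|z|²)^{N-(a+2)/p} (1 - w z̄)^{-N}`. The factor `w^k` makes the
integrand of the `k`-th derivative of `T_{μ,b}` at `z` nonnegative when `N = 2 + b + k`. -/
noncomputable def testFn (p a N : ℝ) (k : ℕ) (z w : ℂ) : ℂ :=
  w ^ k * ((1 - ‖z‖ ^ 2) ^ (N - (a + 2) / p) : ℝ) * (1 - w * (starRingEnd ℂ) z) ^ (-(N : ℂ))

lemma testFn_differentiableOn (p a N : ℝ) (k : ℕ) {z : ℂ} (hz : z ∈ ball (0 : ℂ) 1) :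
    DifferentiableOn ℂ (testFn p a N k z) (ball 0 1) := by
  unfold testFn
  refine DifferentiableOn.mul (by fun_prop) ?_
  exact DifferentiableOn.cpow_const (by fun_prop) fun w hw => one_sub_mem_slitPlane hw hz

lemma norm_testFn (p a N : ℝ) (k : ℕ) {z : ℂ} (hz : z ∈ ball (0 : ℂ) 1) (w : ℂ) :
    ‖testFn p a N k z w‖ = ‖w‖ ^ k * (1 - ‖z‖ ^ 2) ^ (N - (a + 2) / p) *
      ‖1 - w * (starRingEnd ℂ) z‖ ^ (-N) := by
  have hy : 0 ≤ 1 - ‖z‖ ^ 2 := by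
    have := mem_ball_zero_iff.1 hz
    nlinarith [norm_nonneg z]
  rw [testFn, ← ofReal_neg, norm_mul, norm_mul, norm_cpow_real, norm_pow, Complex.norm_real,
    Real.norm_of_nonneg (by positivity)]

lemma norm_testFn_le {p a N : ℝ} (hN : 0 ≤ N) (k : ℕ) {z w : ℂ} (hz : z ∈ ball (0 : ℂ) 1)
    {d : ℝ} (hd : 0 < d) (hw : w ∈ ball (0 : ℂ) 1) (h : d ≤ ‖1 - w * (starRingEnd ℂ) z‖) :
    ‖testFn p a N k z w‖ ≤ (1 - ‖z‖ ^ 2) ^ (N - (a + 2) / p) * d ^ (-N) := by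
  have hy : 0 ≤ 1 - ‖z‖ ^ 2 := by
    have := mem_ball_zero_iff.1 hz
    nlinarith [norm_nonneg z]
  rw [norm_testFn p a N k hz]
  have h3 : ‖w‖ ^ k ≤ 1 := pow_le_one₀ (norm_nonneg _) (mem_ball_zero_iff.1 hw).le
  have h4 := Real.rpow_le_rpow_of_nonpos hd h (neg_nonpos.2 hN)
  calc _ ≤ 1 * (1 - ‖z‖ ^ 2) ^ (N - (a + 2) / p) * d ^ (-N) := by gcongr
    _ = _ := by ring

lemma wnorm_testFn {p a N : ℝ} (hp : 0 < p) (ha : -1 < a) (hN : 2 + a < N * p) (k : ℕ) :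
    ∃ M : ℝ≥0, ∀ z ∈ ball (0 : ℂ) 1, wnorm p a (testFn p a N k z) ≤ M := by
  obtain ⟨C, hC, h⟩ := forelli_rudin ha hN
  refine ⟨(C ^ (1 / p)).toNNReal, fun z hz => ?_⟩
  have hypos : ∀ w ∈ ball (0 : ℂ) 1, 0 < 1 - ‖w‖ ^ 2 := fun w hw => by
    have := mem_ball_zero_iff.1 hw
    nlinarith [norm_nonneg w]
  have hy := hypos z hz
  have ha1 : 0 < 1 + a := by linarith
  set y := 1 - ‖z‖ ^ 2 with hydef
  have hint : ∫⁻ w in ball (0 : ℂ) 1, ENNReal.ofReal (‖testFn p a N k z w‖ ^ p * stdW a w) ∂dA ≤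
      ENNReal.ofReal C := by
    calc _ ≤ ∫⁻ w in ball (0 : ℂ) 1, ENNReal.ofReal (y ^ (N * p - (a + 2))) *
          ENNReal.ofReal (stdW a w * ‖1 - w * (starRingEnd ℂ) z‖ ^ (-(N * p))) ∂dA := by
          refine setLIntegral_mono' measurableSet_ball fun w hw => ?_
          have hy2 := hypos w hw
          have hW : 0 ≤ stdW a w := by unfold stdW; positivity
          rw [← ENNReal.ofReal_mul (by positivity)]
          refine ENNReal.ofReal_le_ofReal ?_
          have h3 : ‖w‖ ^ k ≤ 1 := pow_le_one₀ (norm_nonneg _) (mem_ball_zero_iff.1 hw).le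
          have h1 : ‖testFn p a N k z w‖ ^ p ≤
              y ^ (N * p - (a + 2)) * ‖1 - w * (starRingEnd ℂ) z‖ ^ (-(N * p)) := by
            rw [norm_testFn p a N k hz]
            calc _ ≤ (1 * y ^ (N - (a + 2) / p) * ‖1 - w * (starRingEnd ℂ) z‖ ^ (-N)) ^ p := by
                  gcongr
              _ = _ := by
                  rw [one_mul, Real.mul_rpow (by positivity) (by positivity), ← Real.rpow_mul hy.le,
                    ← Real.rpow_mul (norm_nonneg _), sub_mul, div_mul_cancel₀ _ hp.ne', neg_mul]
          calc _ ≤ (y ^ (N * p - (a + 2)) * ‖1 - w * (starRingEnd ℂ) z‖ ^ (-(N * p))) *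
                stdW a w := by gcongr
            _ = _ := by ring
      _ ≤ ENNReal.ofReal (y ^ (N * p - (a + 2))) *
          ENNReal.ofReal (C * y ^ (2 + a - N * p)) := by
          rw [lintegral_const_mul' _ _ ENNReal.ofReal_ne_top]
          gcongr
          exact h z hz
      _ = _ := by
          rw [← ENNReal.ofReal_mul (by positivity), mul_left_comm, ← Real.rpow_add hy]
          ring_nf
          simp
  rw [wnorm]
  refine (ENNReal.rpow_le_rpow hint (by positivity)).trans (le_of_eq ?_)
  rw [ENNReal.ofReal_rpow_of_pos hC]
  rfl

/-- The derivative `∂^k T_{μ,b}` of the test function at its own pole dominates the mass of the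
pseudohyperbolic disk. -/
lemma measure_le_of_toep {p q q' a b r : ℝ} (hq : q.HolderConjugate q') (hb : -1 < b)
    (hr : r < 1) (k : ℕ) : ∃ C : ℝ, 0 < C ∧
    ∀ (μ : Measure ℂ) [IsFiniteMeasure μ] (z : ℂ) (T : ℝ), z ∈ ball (0 : ℂ) 1 →
      1 - ‖z‖ ^ 2 ≤ (1 - r) / 2 → 0 ≤ T →
      wnorm q b (Toep μ b (testFn p a (2 + b + k) k z)) ≤ ENNReal.ofReal T →
      μ (pD z r) ≤ ENNReal.ofReal (C * T * (1 - ‖z‖ ^ 2) ^ ((a + 2) / p + (b + 2) / q')) := by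
  obtain ⟨C, hC, h⟩ := toepDer_growth hq.pos hb k
  have hk0 : (0 : ℝ) ≤ k := k.cast_nonneg
  set N : ℝ := 2 + b + k with hN
  have hN0 : 0 < N := by linarith
  have hr0 : 0 < 1 - r := by linarith
  set L₀ : ℝ := (1 / 2) ^ (2 * k) * (1 - r) ^ (2 * N) with hL₀
  have hL₀pos : 0 < L₀ := by positivity
  refine ⟨C / L₀, by positivity, fun μ _ z T hz hzr hT hwn => ?_⟩
  have hz1 := mem_ball_zero_iff.1 hz
  have hz0 := norm_nonneg z
  set y := 1 - ‖z‖ ^ 2 with hydef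
  have hy : 0 < y := by nlinarith
  set E : ℝ := N - (a + 2) / p with hE
  set g : ℂ → ℝ := fun w => y ^ E * ‖w‖ ^ (2 * k) * ‖1 - z * (starRingEnd ℂ) w‖ ^ (-(2 * N)) with hg
  have hconj : ∀ w, ‖1 - w * (starRingEnd ℂ) z‖ = ‖1 - z * (starRingEnd ℂ) w‖ := fun w => by
    rw [← RCLike.norm_conj]
    simp [mul_comm]
  have hbd : ∀ w ∈ ball (0 : ℂ) 1,
      ‖testFn p a N k z w‖ ≤ y ^ E * (1 - ‖z‖) ^ (-N) := fun w hw =>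
    norm_testFn_le hN0.le k hz (by linarith) hw (by rw [hconj]; exact one_sub_norm_le hw)
  have hcont := (testFn_differentiableOn p a N k hz).continuousOn
  have hgr := h μ _ _ T hcont hbd hT hwn z hz
  have hint : ∀ w ∈ ball (0 : ℂ) 1, testFn p a N k z w * (starRingEnd ℂ) w ^ k *
      (1 - z * (starRingEnd ℂ) w) ^ (-((2 + b + k : ℝ) : ℂ)) = (g w : ℂ) := by
    intro w hw
    rw [← hN, testFn, ← hE]
    set u : ℂ := 1 - z * (starRingEnd ℂ) w with hu
    have hu' : 1 - w * (starRingEnd ℂ) z = (starRingEnd ℂ) u := by rw [hu]; simp [mul_comm]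
    have harg : u.arg ≠ Real.pi := slitPlane_arg_ne_pi (one_sub_mem_slitPlane hz hw)
    have hc : (starRingEnd ℂ) u ^ (-(N : ℂ)) = (starRingEnd ℂ) (u ^ (-(N : ℂ))) := by
      have := conj_cpow u (-(N : ℂ)) harg
      simpa using this
    have h1 : w ^ k * (starRingEnd ℂ) w ^ k = ((‖w‖ ^ (2 * k) : ℝ) : ℂ) := by
      rw [← mul_pow, mul_conj, normSq_eq_norm_sq, pow_mul]
      push_cast
      rfl
    have h2 : (starRingEnd ℂ) (u ^ (-(N : ℂ))) * u ^ (-(N : ℂ)) =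
        ((‖u‖ ^ (-(2 * N)) : ℝ) : ℂ) := by
      rw [mul_comm, mul_conj, normSq_eq_norm_sq, ← ofReal_neg, norm_cpow_real,
        ← Real.rpow_natCast, ← Real.rpow_mul (norm_nonneg _)]
      congr 2
      push_cast
      ring
    rw [hu', hc, hg]
    push_cast
    push_cast at h1 h2
    linear_combination ((y ^ E : ℝ) : ℂ) * (starRingEnd ℂ) (u ^ (-(N : ℂ))) * u ^ (-(N : ℂ)) * h1 +
      ((y ^ E : ℝ) : ℂ) * ((‖w‖ : ℂ) ^ (2 * k)) * h2
  have hg0 : ∀ w, 0 ≤ g w := fun w => by rw [hg]; positivity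
  have hgint : Integrable g (μ.restrict (ball 0 1)) := by
    have hd := (toepDer_continuousOn hcont hz k (-((2 + b + k : ℝ) : ℂ)))
    have h1 : Integrable (fun w => (g w : ℂ)) (μ.restrict (ball 0 1)) := by
      refine Integrable.congr (f := fun w => testFn p a N k z w * (starRingEnd ℂ) w ^ k *
        (1 - z * (starRingEnd ℂ) w) ^ (-((2 + b + k : ℝ) : ℂ))) ?_ ?_
      · refine Integrable.of_bound (hd.aestronglyMeasurable measurableSet_ball)
          (y ^ E * (1 - ‖z‖) ^ (-N) * (1 - ‖z‖) ^ (-(2 + b + k))) ?_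
        filter_upwards [ae_restrict_mem measurableSet_ball] with w hw
        exact toepDer_bound hbd (by linarith) le_rfl hN0.le k hw
      · filter_upwards [ae_restrict_mem measurableSet_ball] with w hw
        exact hint w hw
    simpa using h1.re
  have hval : ‖toepDer μ b (testFn p a N k z) k z‖ = ∫ w in ball (0 : ℂ) 1, g w ∂μ := by
    rw [toepDer, setIntegral_congr_fun measurableSet_ball hint, integral_complex_ofReal,
      Complex.norm_real, Real.norm_of_nonneg (integral_nonneg hg0)]
  set L : ℝ := L₀ * y ^ (E - 2 * N) with hL
  have hLpos : 0 < L := by positivity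
  have hsub : pD z r ⊆ {w | L ≤ g w} ∩ ball 0 1 := by
    intro w hw
    refine ⟨?_, hw.1⟩
    obtain ⟨h1, -, -, h4⟩ := pD_comp hz hw
    have e1 : ‖1 - (starRingEnd ℂ) z * w‖ = ‖1 - z * (starRingEnd ℂ) w‖ := by
      rw [← hconj, mul_comm]
    rw [e1] at h1 h4
    have h5 := one_sub_norm_le (z := z) hw.1
    have h6 : ‖1 - z * (starRingEnd ℂ) w‖ ≤ y / (1 - r) := (le_div_iff₀ hr0).2 h1
    have h7 : y / (1 - r) ≤ 1 / 2 := by rw [div_le_iff₀ hr0]; linarith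
    have h8 : 1 / 2 ≤ ‖w‖ := by linarith
    have h9 : (y / (1 - r)) ^ (-(2 * N)) ≤ ‖1 - z * (starRingEnd ℂ) w‖ ^ (-(2 * N)) :=
      Real.rpow_le_rpow_of_nonpos (by linarith) h6 (by linarith)
    have e2 : (y / (1 - r)) ^ (-(2 * N)) = y ^ (-(2 * N)) * (1 - r) ^ (2 * N) := by
      rw [Real.div_rpow hy.le hr0.le, Real.rpow_neg hr0.le, div_inv_eq_mul]
    show L ≤ y ^ E * ‖w‖ ^ (2 * k) * ‖1 - z * (starRingEnd ℂ) w‖ ^ (-(2 * N))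
    calc L = y ^ E * (1 / 2) ^ (2 * k) * (y / (1 - r)) ^ (-(2 * N)) := by
          rw [e2, hL, hL₀, sub_eq_add_neg E, Real.rpow_add hy]
          ring
      _ ≤ _ := by gcongr
  have hmain : L * μ.real (pD z r) ≤ C * T * y ^ (-((b + 2) / q + k)) := by
    refine le_trans ?_ (hval ▸ hgr)
    refine le_trans ?_ (mul_meas_ge_le_integral_of_nonneg (Eventually.of_forall hg0) hgint L)
    gcongr
    rw [measureReal_def, measureReal_def]
    refine ENNReal.toReal_mono (measure_ne_top _ _) ?_
    rw [Measure.restrict_apply' measurableSet_ball]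
    exact measure_mono hsub
  have hfin : μ.real (pD z r) ≤ C / L₀ * T * y ^ ((a + 2) / p + (b + 2) / q') := by
    have e3 : (a + 2) / p + (b + 2) / q' = -((b + 2) / q + k) - (E - 2 * N) := by
      have : (b + 2) / q + (b + 2) / q' = b + 2 := by
        have := hq.inv_add_inv_eq_one
        rw [div_eq_mul_inv, div_eq_mul_inv, ← mul_add, this, mul_one]
      rw [hE]
      linarith
    rw [e3, Real.rpow_sub hy]
    rw [mul_comm, ← le_div_iff₀ hLpos] at hmain
    refine hmain.trans (le_of_eq ?_)
    rw [hL]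
    field_simp
  rw [← ENNReal.ofReal_toReal (measure_ne_top μ (pD z r))]
  exact ENNReal.ofReal_le_ofReal hfin

lemma testFn_tendsto {p a N : ℝ} (hN : 0 ≤ N) (hE : 0 < N - (a + 2) / p) (k : ℕ) {z : ℕ → ℂ}
    (hz : ∀ n, z n ∈ ball (0 : ℂ) 1) (hlim : Tendsto (fun n => ‖z n‖) atTop (𝓝 1)) :
    TendstoLocallyUniformlyOn (fun n => testFn p a N k (z n)) (fun _ => 0) atTop
      (ball (0 : ℂ) 1) := by
  rw [Metric.tendstoLocallyUniformlyOn_iff]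
  intro ε hε x hx
  have hx1 := mem_ball_zero_iff.1 hx
  set d := (1 - ‖x‖) / 2 with hd
  have hd0 : 0 < d := by rw [hd]; linarith
  refine ⟨ball x d, mem_nhdsWithin_of_mem_nhds (ball_mem_nhds x hd0), ?_⟩
  have h1 : Tendsto (fun n => (1 - ‖z n‖ ^ 2) ^ (N - (a + 2) / p) * d ^ (-N)) atTop (𝓝 0) := by
    have h2 : Tendsto (fun n => 1 - ‖z n‖ ^ 2) atTop (𝓝 0) := by
      simpa using (hlim.pow 2).const_sub 1
    have h3 := h2.rpow_const (p := N - (a + 2) / p) (Or.inr hE.le)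
    rw [Real.zero_rpow hE.ne'] at h3
    simpa using h3.mul_const (d ^ (-N))
  filter_upwards [h1.eventually_lt_const hε] with n hn w hw
  have hwd : d ≤ 1 - ‖w‖ := by
    rw [mem_ball, dist_eq_norm] at hw
    have := norm_sub_norm_le w x
    rw [hd] at hw ⊢
    linarith
  rw [dist_zero_left]
  refine (norm_testFn_le hN k (hz n) hd0 (mem_ball_zero_iff.2 (by linarith)) ?_).trans_lt hn
  exact hwd.trans (one_sub_norm_le (hz n))

/-- Necessity. A sequence `zₙ` violating the vanishing condition and tending to the unit circle gives
test functions `testFn` contradicting compactness. -/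
lemma vanishing_of_compact {p q q' a b : ℝ} (hp : 0 < p) (ha : -1 < a) (hq : q.HolderConjugate q')
    (hb : -1 < b) {μ : Measure ℂ} [IsFiniteMeasure μ]
    (h : ∀ f : ℕ → ℂ → ℂ,
        (∀ n, DifferentiableOn ℂ (f n) (ball (0 : ℂ) 1)) →
        (∃ M : ℝ≥0, ∀ n, wnorm p a (f n) ≤ M) →
        TendstoLocallyUniformlyOn f (fun _ => 0) atTop (ball (0 : ℂ) 1) →
        Tendsto (fun n => wnorm q b (Toep μ b (f n))) atTop (𝓝 0))
    {r : ℝ} (hr : r ∈ Set.Ioo (0 : ℝ) 1) {ε : ℝ} (hε : 0 < ε) :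
    ∃ δ ∈ Set.Ioo (0 : ℝ) 1, ∀ z ∈ ball (0 : ℂ) 1, δ < ‖z‖ →
      μ (pD z r) < ENNReal.ofReal (ε * (1 - ‖z‖ ^ 2) ^ ((a + 2) / p + (b + 2) / q')) := by
  by_contra! hcon
  have hn : ∀ n : ℕ, (1 - 1 / ((n : ℝ) + 2)) ∈ Set.Ioo (0 : ℝ) 1 := fun n => by
    have h0 : (0 : ℝ) < (n : ℝ) + 2 := by positivity
    have h1 : 1 / ((n : ℝ) + 2) < 1 := by
      rw [div_lt_one h0]
      have : (0 : ℝ) ≤ n := n.cast_nonneg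
      linarith
    exact ⟨by linarith, by have : 0 < 1 / ((n : ℝ) + 2) := by positivity
                           linarith⟩
  choose z hz hzn hzμ using fun n : ℕ => hcon _ (hn n)
  have hlim : Tendsto (fun n => ‖z n‖) atTop (𝓝 1) := by
    refine tendsto_of_tendsto_of_tendsto_of_le_of_le (g := fun n : ℕ => 1 - 1 / ((n : ℝ) + 2))
      (h := fun _ => 1) ?_ tendsto_const_nhds (fun n => (hzn n).le)
      (fun n => (mem_ball_zero_iff.1 (hz n)).le)
    have h1 : Tendsto (fun n : ℕ => 1 / ((n : ℝ) + 2)) atTop (𝓝 0) := by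
      have := (tendsto_add_atTop_iff_nat 1).2 (tendsto_one_div_add_atTop_nhds_zero_nat (𝕜 := ℝ))
      refine this.congr fun n => ?_
      push_cast
      ring
    simpa using h1.const_sub 1
  obtain ⟨k, hk⟩ := exists_nat_gt ((a + 2) / p)
  have hap : 0 < (a + 2) / p := div_pos (by linarith) hp
  have hE : 0 < (2 + b + k) - (a + 2) / p := by linarith
  obtain ⟨C, hC, hT⟩ := measure_le_of_toep (p := p) (a := a) hq hb hr.2 k
  obtain ⟨M, hM⟩ := wnorm_testFn (N := 2 + b + k) hp ha (by
    have := (div_lt_iff₀ hp).1 (show (a + 2) / p < 2 + b + k by linarith)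
    linarith) k
  have ht := h (fun n => testFn p a (2 + b + k) k (z n))
    (fun n => testFn_differentiableOn p a _ k (hz n)) ⟨M, fun n => hM _ (hz n)⟩
    (testFn_tendsto (by linarith) hE k hz hlim)
  have hy : Tendsto (fun n => 1 - ‖z n‖ ^ 2) atTop (𝓝 0) := by
    simpa using (hlim.pow 2).const_sub 1
  have hT0 : 0 < ε / (2 * C) := by positivity
  obtain ⟨n, h1, h2⟩ := ((hy.eventually_le_const (show (0 : ℝ) < (1 - r) / 2 by
    linarith [hr.2])).and (ht.eventually_le_const (ENNReal.ofReal_pos.2 hT0))).exists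
  have h3 := (hzμ n).trans (hT μ (z n) (ε / (2 * C)) (hz n) h1 hT0.le h2)
  have hyn : 0 < 1 - ‖z n‖ ^ 2 := by
    have := mem_ball_zero_iff.1 (hz n)
    nlinarith [norm_nonneg (z n)]
  rw [ENNReal.ofReal_le_ofReal_iff (by positivity)] at h3
  have h4 : 0 < (1 - ‖z n‖ ^ 2) ^ ((a + 2) / p + (b + 2) / q') := by positivity
  have h5 : C * (ε / (2 * C)) = ε / 2 := by field_simp
  rw [h5] at h3
  nlinarith

theorem stmt15 (p q q' a b : ℝ) (hp0 : 0 < p) (hp1 : p ≤ 1) (hq : 1 < q)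
    (hq' : 1 / q + 1 / q' = 1) (hb : -1 < b) (hba : b ≤ a)
    (μ : Measure ℂ) [IsFiniteMeasure μ] :
    (∀ f : ℕ → ℂ → ℂ,
        (∀ n, DifferentiableOn ℂ (f n) (ball (0 : ℂ) 1)) →
        (∃ M : ℝ≥0, ∀ n, wnorm p a (f n) ≤ M) →
        TendstoLocallyUniformlyOn f (fun _ => 0) atTop (ball (0 : ℂ) 1) →
        Tendsto (fun n => wnorm q b (Toep μ b (f n))) atTop (𝓝 0)) ↔
      (∀ r ∈ Set.Ioo (0 : ℝ) 1, ∀ ε > (0 : ℝ), ∃ δ ∈ Set.Ioo (0 : ℝ) 1,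
        ∀ z ∈ ball (0 : ℂ) 1, δ < ‖z‖ →
          μ (pD z r) <
            ENNReal.ofReal
              (ε * (1 - ‖z‖ ^ 2) ^ ((a + 2) * (1 / p + ((b + 2) / (a + 2)) / q')))) := by
  have ha : -1 < a := hb.trans_le hba
  have hH : q.HolderConjugate q' :=
    Real.holderConjugate_iff.2 ⟨hq, by simpa only [one_div] using hq'⟩
  have he : (a + 2) * (1 / p + ((b + 2) / (a + 2)) / q') = (a + 2) / p + (b + 2) / q' := by
    have h1 : a + 2 ≠ 0 := by linarith
    have h2 : q' ≠ 0 := hH.symm.ne_zero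
    field_simp
  rw [he]
  refine ⟨fun h r hr ε hε => vanishing_of_compact hp0 ha hH hb h hr hε, fun h f hf hM hlim => ?_⟩
  obtain ⟨M, hM⟩ := hM
  refine tendsto_wnorm_toep hp0 hp1 hH hb ha (fun ε hε => ?_) hf hM hlim
  obtain ⟨δ, hδ, h1⟩ := h (1 / 2) ⟨by norm_num, by norm_num⟩ ε hε
  exact ⟨δ, hδ, fun z hz hzδ => (h1 z hz hzδ).le⟩
end

section
/- Let $0<p\le 1$, $-1<\alpha,\beta<\infty$, and suppose $\mu$ is a vanishing $(1/p)$-Carleson measure for $L^1_a(\omega_\alpha)$, i.e. $\lim_{|z|\to1^-}\mu(D(z,r))/(1-|z|^2)^{(\alpha+2)/p}=0$. Let $\{f_j\}$ be bounded in $L^1_a(\omega_\alpha)$ with $f_j\to 0$ uniformly on compact subsets of $\mathbb{D}$. Then for every fixed $\zeta\in\mathbb{D}$, $\lim_{j\to\infty}T_{\mu,\beta}(f_j)(\zeta)=0$. -/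
/-!
For fixed `ζ` the kernel `(1 - ζ w̄) ^ (-(2 + b))` is bounded on the disk, so it suffices that
`∫ ‖f n‖ dμ` over the disk tends to `0` (`Toep_le`). On a compact disk `|w| ≤ R` this follows from
uniform convergence and the finiteness of `μ`. The remaining annulus is handled uniformly in `n` by
the Carleson condition (`tail_bound`): the area sub-mean value inequality (`disk_submean`) bounds
`‖f w‖` by the average of `‖f‖` over the Euclidean disk of radius `(1 - |w|) / 2`, Tonelli exchanges
the integrals in `w` and `u`, and the inner integral is then at most `μ (D(u, 1/2))`, which is
`≤ ε (1 - |u|²) ^ ((a + 2) / p) ≤ ε (1 - |u|²) ^ (a + 2)` because `p ≤ 1`. Two powers of `1 - |u|²` cancel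
the area of the disk, leaving `ε` times the weighted `L¹` norm, which is bounded (`weighted_le`).
-/

open MeasureTheory Metric Filter Complex Set
open scoped ENNReal NNReal Topology

/-! ### Sub-mean value property on disks -/

lemma measurable_indicator_enorm {f : ℂ → ℂ} {s : Set ℂ} (hs : MeasurableSet s)
    (hf : DifferentiableOn ℂ f s) : Measurable (s.indicator (fun u => ‖f u‖ₑ)) := by
  have : Measurable (s.indicator f) := by
    classical
    rw [← piecewise_eq_indicator]
    exact hf.continuousOn.measurable_piecewise continuousOn_const hs
  convert this.enorm using 2
  rw [enorm_indicator_eq_indicator_enorm]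

/-- Unnormalized sub-mean value inequality on the circle of radius `r`, parametrized by the angle
range of `Complex.polarCoord` so that it can be integrated over `r` in polar coordinates. -/
lemma circle_submean {f : ℂ → ℂ} {w : ℂ} {ρ r : ℝ} (hr0 : 0 < r) (hr : r < ρ)
    (hf : DifferentiableOn ℂ f (ball w ρ)) :
    ∫⁻ _ in Ioo (-Real.pi) Real.pi, ‖f w‖ₑ ≤
      ∫⁻ θ in Ioo (-Real.pi) Real.pi,
        ‖f (w + Complex.polarCoord.symm (r, θ))‖ₑ := by
  have hcl : DiffContOnCl ℂ f (ball w |r|) := by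
    rw [abs_of_pos hr0]
    exact (hf.mono (closedBall_subset_ball hr)).diffContOnCl_ball le_rfl
  have h1 := hcl.circleAverage
  -- Mathlib averages over `(0, 2π)`; shift the angle by `-π` to match `polarCoord.target`.
  rw [Real.circleAverage_eq_integral_add (-Real.pi),
    intervalIntegral.integral_comp_add_right (fun θ => f (circleMap w r θ))] at h1
  have e1 : (0 : ℝ) + -Real.pi = -Real.pi := by ring
  have e2 : 2 * Real.pi + -Real.pi = Real.pi := by ring
  rw [e1, e2, intervalIntegral.integral_of_le (by linarith [Real.pi_pos]),
    integral_Ioc_eq_integral_Ioo] at h1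
  have h2 : ((2 * Real.pi : ℝ)) • f w = ∫ θ in Ioo (-Real.pi) Real.pi, f (circleMap w r θ) := by
    rw [← h1, smul_smul, mul_inv_cancel₀ (by positivity), one_smul]
  calc ∫⁻ _ in Ioo (-Real.pi) Real.pi, ‖f w‖ₑ = ‖((2 * Real.pi : ℝ)) • f w‖ₑ := by
        rw [lintegral_const, enorm_smul, mul_comm, Measure.restrict_apply_univ, Real.volume_Ioo,
          Real.enorm_eq_ofReal (by positivity)]
        congr 2; ring
    _ ≤ ∫⁻ θ in Ioo (-Real.pi) Real.pi, ‖f (circleMap w r θ)‖ₑ := by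
        rw [h2]; exact enorm_integral_le_lintegral_enorm _
    _ = _ := by
        refine lintegral_congr fun θ => ?_
        rw [Complex.polarCoord_symm_apply, circleMap, Complex.exp_mul_I]
        simp

/-- Area sub-mean value inequality for `‖f‖`. Both sides are written in polar coordinates around `w`
and compared circle by circle, so the radial integral never has to be computed. -/
lemma disk_submean {f : ℂ → ℂ} {w : ℂ} {ρ : ℝ}
    (hf : DifferentiableOn ℂ f (ball w ρ)) :
    ‖f w‖ₑ * volume (ball w ρ) ≤ ∫⁻ u in ball w ρ, ‖f u‖ₑ := by
  set F : ℂ → ℝ≥0∞ := fun v => (ball w ρ).indicator (fun u => ‖f u‖ₑ) (w + v) with hF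
  set G : ℂ → ℝ≥0∞ := fun v => (ball w ρ).indicator (fun _ => ‖f w‖ₑ) (w + v) with hG
  have hmF0 : Measurable ((ball w ρ).indicator (fun u => ‖f u‖ₑ)) :=
    measurable_indicator_enorm measurableSet_ball hf
  have hmF : Measurable F := hmF0.comp (measurable_const_add w)
  have hmG : Measurable G :=
    (measurable_const.indicator measurableSet_ball).comp (measurable_const_add w)
  have hpm : Measurable (fun p : ℝ × ℝ => Complex.polarCoord.symm p) := by
    simp only [Complex.polarCoord_symm_apply]; fun_prop
  have polar : ∀ H : ℂ → ℝ≥0∞, Measurable H → ∫⁻ v, H v = ∫⁻ r in Ioi (0 : ℝ),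
      ∫⁻ θ in Ioo (-Real.pi) Real.pi,
        ENNReal.ofReal r * H (Complex.polarCoord.symm (r, θ)) := by
    intro H hH
    rw [← Complex.lintegral_comp_polarCoord_symm, polarCoord_target, Measure.volume_eq_prod,
      ← Measure.prod_restrict, lintegral_prod]
    · simp only [smul_eq_mul]
    · simp only [smul_eq_mul]
      exact ((measurable_fst.ennreal_ofReal).mul (hH.comp hpm)).aemeasurable
  have hl : ‖f w‖ₑ * volume (ball w ρ) = ∫⁻ v, G v := by
    rw [hG, lintegral_add_left_eq_self (fun v => (ball w ρ).indicator (fun _ => ‖f w‖ₑ) v) w,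
      lintegral_indicator measurableSet_ball, setLIntegral_const]
  have hr : ∫⁻ u in ball w ρ, ‖f u‖ₑ = ∫⁻ v, F v := by
    rw [hF, lintegral_add_left_eq_self (fun v => (ball w ρ).indicator (fun u => ‖f u‖ₑ) v) w,
      lintegral_indicator measurableSet_ball]
  rw [hl, hr, polar F hmF, polar G hmG]
  refine setLIntegral_mono' measurableSet_Ioi fun r hr0 => ?_
  have hr0 : 0 < r := hr0
  rw [lintegral_const_mul' _ _ ENNReal.ofReal_ne_top,
    lintegral_const_mul' _ _ ENNReal.ofReal_ne_top]
  gcongr 1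
  have hmem : ∀ θ : ℝ, w + Complex.polarCoord.symm (r, θ) ∈ ball w ρ ↔ r < ρ := by
    intro θ
    rw [mem_ball, dist_eq_norm, add_sub_cancel_left, Complex.norm_polarCoord_symm, abs_of_pos hr0]
  by_cases h : r < ρ
  · have := circle_submean hr0 h hf
    simpa only [hF, hG, indicator, hmem, h, if_true] using this
  · simp only [hF, hG, indicator, hmem, h, if_false, le_refl]

/-! ### Mass near the unit circle -/

/-- The Euclidean disk around `w` with half the radius allowed by the unit circle lies within
pseudohyperbolic distance `1/2` of `w`; the inclusion is stated with `u` as the centre of the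
pseudohyperbolic disk, as needed once the order of integration is exchanged. -/
lemma mem_pD_half {u w : ℂ} (hw : ‖w‖ < 1) (hu : ‖u‖ < 1)
    (h : ‖u - w‖ < (1 - ‖w‖) / 2) : w ∈ pD u (1 / 2) := by
  refine ⟨by simpa using hw, ?_⟩
  have h1 : 1 - ‖w‖ ≤ ‖1 - (starRingEnd ℂ) u * w‖ := by
    have h2 := norm_sub_norm_le (1 : ℂ) ((starRingEnd ℂ) u * w)
    rw [norm_one, norm_mul, RCLike.norm_conj] at h2
    nlinarith [norm_nonneg w]
  rw [norm_div, div_lt_iff₀ (by linarith)]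
  linarith

/-- Carleson embedding estimate near the boundary: if `μ (D(z, 1/2)) ≤ ε (1 - |z|²) ^ q` for
`|z| > δ`, with `q ≥ a + 2`, then the `μ`-mass of `‖f‖` outside `closedBall 0 R` is at most a constant
times `ε` times the weighted area integral of `‖f‖`. The threshold on `R` guarantees `|u| > δ`
whenever `|w| > R` and `|u - w| < (1 - |w|) / 2`. -/
lemma tail_bound {q a δ ε R : ℝ} (hq : a + 2 ≤ q) (hε : 0 < ε) (hR : (1 + 2 * δ) / 3 ≤ R)
    (μ : Measure ℂ) [IsFiniteMeasure μ]
    (hμ : ∀ z ∈ ball (0 : ℂ) 1, δ < ‖z‖ →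
      μ (pD z (1 / 2)) ≤ ENNReal.ofReal (ε * (1 - ‖z‖ ^ 2) ^ q))
    {f : ℂ → ℂ} (hf : DifferentiableOn ℂ f (ball (0 : ℂ) 1)) :
    ∫⁻ w in ball (0 : ℂ) 1 \ closedBall 0 R, ‖f w‖ₑ ∂μ ≤
      ENNReal.ofReal (36 * ε / Real.pi) *
        ∫⁻ u in ball (0 : ℂ) 1, ‖f u‖ₑ * ENNReal.ofReal ((1 - ‖u‖ ^ 2) ^ a) := by
  have hpi := Real.pi_pos
  set G : ℂ → ℝ≥0∞ := (ball (0 : ℂ) 1).indicator (fun u => ‖f u‖ₑ) with hG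
  have hGm : Measurable G := measurable_indicator_enorm measurableSet_ball hf
  set k : ℂ → ℝ≥0∞ := fun u => ENNReal.ofReal (9 / Real.pi / (1 - ‖u‖) ^ 2) with hk
  have hkm : Measurable k := by fun_prop
  -- `S` pairs each `w` with the points of the disk on which the sub-mean inequality is used; `k` is
  -- a bound for the reciprocal of the area of that disk in terms of `u` alone.
  set S : Set (ℂ × ℂ) := {x | ‖x.1‖ < 1 ∧ R < ‖x.1‖ ∧ ‖x.2 - x.1‖ < (1 - ‖x.1‖) / 2} with hS
  have hSm : MeasurableSet S := by
    have h1 : MeasurableSet {x : ℂ × ℂ | ‖x.1‖ < 1} :=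
      measurableSet_lt (by fun_prop) (by fun_prop)
    have h2 : MeasurableSet {x : ℂ × ℂ | R < ‖x.1‖} :=
      measurableSet_lt (by fun_prop) (by fun_prop)
    have h3 : MeasurableSet {x : ℂ × ℂ | ‖x.2 - x.1‖ < (1 - ‖x.1‖) / 2} :=
      measurableSet_lt (by fun_prop) (by fun_prop)
    exact h1.inter (h2.inter h3)
  have hSu : ∀ {w u : ℂ}, (w, u) ∈ S → ‖u‖ < 1 ∧ δ < ‖u‖ ∧ 1 - ‖u‖ ≤ 3 * ((1 - ‖w‖) / 2) := by
    rintro w u ⟨h1, h2, h3⟩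
    dsimp only at h1 h2 h3
    have h4 := norm_sub_norm_le u w
    have h5 := norm_sub_norm_le w u
    rw [norm_sub_rev] at h5
    refine ⟨?_, ?_, ?_⟩ <;> linarith
  set Φ : ℂ → ℂ → ℝ≥0∞ := fun w u => S.indicator (fun x => G x.2 * k x.2) (w, u) with hΦ
  have hΦm : Measurable (Function.uncurry Φ) :=
    ((hGm.comp measurable_snd).mul (hkm.comp measurable_snd)).indicator hSm
  -- Sub-mean inequality, with the normalizing factor moved inside the integral.
  have stepA : ∀ w ∈ ball (0 : ℂ) 1 \ closedBall 0 R, ‖f w‖ₑ ≤ ∫⁻ u, Φ w u := by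
    rintro w ⟨hw1, hw2⟩
    rw [mem_ball_zero_iff] at hw1
    rw [mem_closedBall_zero_iff, not_le] at hw2
    set ρ := (1 - ‖w‖) / 2 with hρ
    have hρ0 : 0 < ρ := by rw [hρ]; linarith
    have hmem : ∀ u ∈ ball w ρ, (w, u) ∈ S := fun u hu =>
      ⟨hw1, hw2, by simpa [dist_eq_norm] using hu⟩
    have hsub : ball w ρ ⊆ ball (0 : ℂ) 1 := fun u hu => by
      simpa using (hSu (hmem u hu)).1
    have hV : volume (ball w ρ) = ENNReal.ofReal (Real.pi * ρ ^ 2) := by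
      rw [Complex.volume_ball, ENNReal.ofReal_mul hpi.le, mul_comm, ENNReal.ofReal_pow hρ0.le,
        ← NNReal.coe_real_pi, ENNReal.ofReal_coe_nnreal]
    have hpos : 0 < Real.pi * ρ ^ 2 := by positivity
    have hsm := disk_submean (hf.mono hsub)
    rw [hV, ← ENNReal.le_div_iff_mul_le (by simp [hpos]) (by simp), ENNReal.div_eq_inv_mul,
      ← ENNReal.ofReal_inv_of_pos hpos] at hsm
    refine hsm.trans ?_
    rw [← lintegral_const_mul' _ _ ENNReal.ofReal_ne_top]
    refine (setLIntegral_mono' measurableSet_ball fun u hu => ?_).trans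
      (setLIntegral_le_lintegral (ball w ρ) _)
    have h3 := hSu (hmem u hu)
    simp only [hΦ, indicator_of_mem (hmem u hu), hG, indicator_of_mem (hsub hu), hk]
    rw [mul_comm]
    gcongr 2
    have hu0 : 0 < 1 - ‖u‖ := by linarith
    rw [div_div, inv_eq_one_div, div_le_div_iff₀ hpos (by positivity)]
    have : (1 - ‖u‖) ^ 2 ≤ (3 * ρ) ^ 2 := pow_le_pow_left₀ (by linarith) h3.2.2 2
    nlinarith
  -- After Tonelli: the `w`-section of `S` at `u` lies in `D(u, 1/2)`, where the Carleson bound holds.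
  have stepB : ∀ u, ∫⁻ w, Φ w u ∂μ ≤ (ball (0 : ℂ) 1).indicator (fun u =>
      ENNReal.ofReal (36 * ε / Real.pi) * (‖f u‖ₑ * ENNReal.ofReal ((1 - ‖u‖ ^ 2) ^ a))) u := by
    intro u
    by_cases hex : ∃ w, (w, u) ∈ S
    · obtain ⟨w₀, hw₀⟩ := hex
      obtain ⟨hu1, huδ, -⟩ := hSu hw₀
      have hub : u ∈ ball (0 : ℂ) 1 := by simpa using hu1
      have hle : ∀ w, Φ w u ≤ {w | (w, u) ∈ S}.indicator (fun _ => ‖f u‖ₑ * k u) w := by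
        intro w
        by_cases h : (w, u) ∈ S
        · simp [hΦ, hG, h, indicator, hu1]
        · simp [hΦ, h]
      have hms : MeasurableSet {w | (w, u) ∈ S} := hSm.preimage (by fun_prop)
      refine (lintegral_mono hle).trans ?_
      rw [lintegral_indicator hms, setLIntegral_const, indicator_of_mem hub]
      have hμu : μ {w | (w, u) ∈ S} ≤ ENNReal.ofReal (ε * (1 - ‖u‖ ^ 2) ^ q) :=
        (measure_mono fun w hw => mem_pD_half hw.1 hu1 hw.2.2).trans (hμ u hub huδ)
      have ht0 : 0 < 1 - ‖u‖ ^ 2 := by nlinarith [norm_nonneg u]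
      have hs0 : 0 < 1 - ‖u‖ := by linarith
      have key : 9 / Real.pi / (1 - ‖u‖) ^ 2 * (ε * (1 - ‖u‖ ^ 2) ^ q) ≤
          36 * ε / Real.pi * (1 - ‖u‖ ^ 2) ^ a := by
        have h1 : (1 - ‖u‖ ^ 2) ^ q ≤ (1 - ‖u‖ ^ 2) ^ a * (1 - ‖u‖ ^ 2) ^ 2 := by
          calc (1 - ‖u‖ ^ 2) ^ q ≤ (1 - ‖u‖ ^ 2) ^ (a + 2) :=
                Real.rpow_le_rpow_of_exponent_ge ht0 (by nlinarith [norm_nonneg u]) hq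
            _ = _ := by rw [Real.rpow_add ht0, Real.rpow_two]
        have h2 : (1 - ‖u‖ ^ 2) ^ 2 ≤ 4 * (1 - ‖u‖) ^ 2 := by
          have : 1 - ‖u‖ ^ 2 ≤ 2 * (1 - ‖u‖) := by nlinarith
          nlinarith
        have h3 : (1 - ‖u‖ ^ 2) ^ q ≤ (1 - ‖u‖ ^ 2) ^ a * (4 * (1 - ‖u‖) ^ 2) :=
          h1.trans (by gcongr)
        calc 9 / Real.pi / (1 - ‖u‖) ^ 2 * (ε * (1 - ‖u‖ ^ 2) ^ q)
            ≤ 9 / Real.pi / (1 - ‖u‖) ^ 2 * (ε * ((1 - ‖u‖ ^ 2) ^ a * (4 * (1 - ‖u‖) ^ 2))) := by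
              gcongr
          _ = _ := by field_simp; ring
      calc ‖f u‖ₑ * k u * μ {w | (w, u) ∈ S}
          ≤ ‖f u‖ₑ * k u * ENNReal.ofReal (ε * (1 - ‖u‖ ^ 2) ^ q) := by gcongr
        _ = ‖f u‖ₑ * ENNReal.ofReal (9 / Real.pi / (1 - ‖u‖) ^ 2 *
              (ε * (1 - ‖u‖ ^ 2) ^ q)) := by
            rw [mul_assoc, hk, ← ENNReal.ofReal_mul (by positivity)]
        _ ≤ ‖f u‖ₑ * ENNReal.ofReal (36 * ε / Real.pi * (1 - ‖u‖ ^ 2) ^ a) := by gcongr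
        _ = _ := by
            rw [ENNReal.ofReal_mul (by positivity)]; ring
    · have : ∀ w, Φ w u = 0 := fun w => indicator_of_notMem (fun h => hex ⟨w, h⟩) _
      simp [this]
  calc ∫⁻ w in ball (0 : ℂ) 1 \ closedBall 0 R, ‖f w‖ₑ ∂μ
      ≤ ∫⁻ w in ball (0 : ℂ) 1 \ closedBall 0 R, (∫⁻ u, Φ w u) ∂μ :=
        setLIntegral_mono' (measurableSet_ball.diff measurableSet_closedBall) stepA
    _ ≤ ∫⁻ w, (∫⁻ u, Φ w u) ∂μ := setLIntegral_le_lintegral _ _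
    _ = ∫⁻ u, (∫⁻ w, Φ w u ∂μ) := lintegral_lintegral_swap hΦm.aemeasurable
    _ ≤ _ := lintegral_mono stepB
    _ = _ := by
      rw [lintegral_indicator measurableSet_ball, lintegral_const_mul' _ _ ENNReal.ofReal_ne_top]

/-! ### Norm and kernel bounds -/

lemma weighted_le {a : ℝ} (ha : -1 < a) {f : ℂ → ℂ} {M : ℝ≥0} (hM : wnorm 1 a f ≤ M) :
    ∫⁻ u in ball (0 : ℂ) 1, ‖f u‖ₑ * ENNReal.ofReal ((1 - ‖u‖ ^ 2) ^ a) ≤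
      ENNReal.ofReal (Real.pi / (1 + a)) * M := by
  have hpi := Real.pi_pos
  have ha' : 0 < 1 + a := by linarith
  have e : wnorm 1 a f = (ENNReal.ofReal Real.pi)⁻¹ * (ENNReal.ofReal (1 + a) *
      ∫⁻ u in ball (0 : ℂ) 1, ‖f u‖ₑ * ENNReal.ofReal ((1 - ‖u‖ ^ 2) ^ a)) := by
    rw [wnorm, div_one, ENNReal.rpow_one, dA, Measure.restrict_smul, lintegral_smul_measure,
      smul_eq_mul, ← lintegral_const_mul' _ _ ENNReal.ofReal_ne_top]
    congr 1
    refine lintegral_congr fun u => ?_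
    rw [Real.rpow_one, ENNReal.ofReal_mul (norm_nonneg _), ofReal_norm, stdW,
      ENNReal.ofReal_mul ha'.le]
    ring
  rw [e, ← mul_assoc, ← ENNReal.ofReal_inv_of_pos hpi, ← ENNReal.ofReal_mul (by positivity)] at hM
  calc _ = ENNReal.ofReal (Real.pi / (1 + a)) * (ENNReal.ofReal (Real.pi⁻¹ * (1 + a)) *
      ∫⁻ u in ball (0 : ℂ) 1, ‖f u‖ₑ * ENNReal.ofReal ((1 - ‖u‖ ^ 2) ^ a)) := by
        rw [← mul_assoc, ← ENNReal.ofReal_mul (by positivity)]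
        have : Real.pi / (1 + a) * (Real.pi⁻¹ * (1 + a)) = 1 := by field_simp
        rw [this, ENNReal.ofReal_one, one_mul]
    _ ≤ _ := by gcongr

/-- The kernel is bounded by `(1 - |ζ|) ^ (-(2 + b))`. No integrability of `f` is needed: the Bochner
integral of a non-integrable function is `0`. -/
lemma Toep_le {b : ℝ} (hb : -1 < b) (μ : Measure ℂ) (f : ℂ → ℂ) {ζ : ℂ}
    (hζ : ζ ∈ ball (0 : ℂ) 1) :
    ‖Toep μ b f ζ‖ₑ ≤ ENNReal.ofReal (((1 - ‖ζ‖) ^ (2 + b))⁻¹) *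
      ∫⁻ w in ball (0 : ℂ) 1, ‖f w‖ₑ ∂μ := by
  rw [mem_ball_zero_iff] at hζ
  rw [Toep, ← lintegral_const_mul' _ _ ENNReal.ofReal_ne_top]
  refine (enorm_integral_le_lintegral_enorm _).trans
    (setLIntegral_mono' measurableSet_ball fun w hw => ?_)
  rw [mem_ball_zero_iff] at hw
  have h1 : 1 - ‖ζ‖ ≤ ‖1 - ζ * (starRingEnd ℂ) w‖ := by
    have h2 := norm_sub_norm_le (1 : ℂ) (ζ * (starRingEnd ℂ) w)
    rw [norm_one, norm_mul, RCLike.norm_conj] at h2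
    nlinarith [norm_nonneg ζ]
  have h0 : 0 < 1 - ‖ζ‖ := by linarith
  rw [← ofReal_norm, ← ofReal_norm, ← ENNReal.ofReal_mul (by positivity)]
  refine ENNReal.ofReal_le_ofReal ?_
  rw [norm_div, Complex.norm_cpow_real, div_eq_inv_mul]
  gcongr
  linarith

/-! ### Convergence -/

theorem stmt17 (p a b : ℝ) (hp0 : 0 < p) (hp1 : p ≤ 1) (ha : -1 < a) (hb : -1 < b)
    (μ : Measure ℂ) [IsFiniteMeasure μ]
    (hμ : ∀ r ∈ Set.Ioo (0 : ℝ) 1, ∀ ε > (0 : ℝ), ∃ δ ∈ Set.Ioo (0 : ℝ) 1,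
      ∀ z ∈ ball (0 : ℂ) 1, δ < ‖z‖ →
        μ (pD z r) < ENNReal.ofReal (ε * (1 - ‖z‖ ^ 2) ^ ((a + 2) / p)))
    (f : ℕ → ℂ → ℂ)
    (hdiff : ∀ n, DifferentiableOn ℂ (f n) (ball (0 : ℂ) 1))
    (hbd : ∃ M : ℝ≥0, ∀ n, wnorm 1 a (f n) ≤ M)
    (hconv : TendstoLocallyUniformlyOn f (fun _ => 0) atTop (ball (0 : ℂ) 1)) :
    ∀ ζ ∈ ball (0 : ℂ) 1, Tendsto (fun n => Toep μ b (f n) ζ) atTop (𝓝 0) := by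
  intro ζ hζ
  obtain ⟨M, hM⟩ := hbd
  have ha' : 0 < 1 + a := by linarith
  have hpi := Real.pi_pos
  have hq : a + 2 ≤ (a + 2) / p := by
    rw [le_div_iff₀ hp0]; nlinarith
  have hζ1 : 0 < 1 - ‖ζ‖ := by rw [mem_ball_zero_iff] at hζ; linarith
  set K : ℝ := ((1 - ‖ζ‖) ^ (2 + b))⁻¹ with hK
  have hK0 : 0 ≤ K := by positivity
  set C : ℝ := K * (36 / (1 + a) * M + μ.real univ) with hC
  have hC0 : 0 ≤ C := by positivity
  rw [Metric.tendsto_atTop']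
  intro η hη
  -- The estimates below give `‖Toep μ b (f n) ζ‖ ≤ C * ε`, which is `< η` for this `ε`.
  set ε : ℝ := η / (C + 1) with hεdef
  have hε : 0 < ε := by positivity
  obtain ⟨δ, ⟨hδ0, hδ1⟩, hδ⟩ := hμ (1 / 2) (by norm_num) ε hε
  set R : ℝ := (1 + 2 * δ) / 3 with hR
  have hR1 : R < 1 := by rw [hR]; linarith
  have hRsub : closedBall (0 : ℂ) R ⊆ ball 0 1 := closedBall_subset_ball hR1
  have hunif : TendstoUniformlyOn f (fun _ => 0) atTop (closedBall (0 : ℂ) R) :=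
    (tendstoLocallyUniformlyOn_iff_tendstoUniformlyOn_of_compact (isCompact_closedBall _ _)).1
      (hconv.mono hRsub)
  have hev := Metric.tendstoUniformlyOn_iff.1 hunif ε hε
  obtain ⟨N, hN⟩ := eventually_atTop.1 hev
  refine ⟨N, fun n hn => ?_⟩
  have hn := hN n hn.le
  have hcore : ∫⁻ w in closedBall (0 : ℂ) R, ‖f n w‖ₑ ∂μ ≤ ENNReal.ofReal (ε * μ.real univ) := by
    calc ∫⁻ w in closedBall (0 : ℂ) R, ‖f n w‖ₑ ∂μ
        ≤ ∫⁻ w in closedBall (0 : ℂ) R, ENNReal.ofReal ε ∂μ := by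
          refine setLIntegral_mono' measurableSet_closedBall fun w hw => ?_
          rw [← ofReal_norm]
          have := hn w hw
          rw [dist_zero_left] at this
          exact ENNReal.ofReal_le_ofReal this.le
      _ ≤ ENNReal.ofReal ε * μ univ := by
          rw [setLIntegral_const]; gcongr; exact subset_univ _
      _ = _ := by
          rw [ENNReal.ofReal_mul hε.le, ofReal_measureReal]
  have htail : ∫⁻ w in ball (0 : ℂ) 1 \ closedBall 0 R, ‖f n w‖ₑ ∂μ ≤
      ENNReal.ofReal (36 * ε / (1 + a) * M) := by
    refine (tail_bound hq hε le_rfl μ (fun z hz hz' => (hδ z hz hz').le) (hdiff n)).trans ?_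
    calc _ ≤ ENNReal.ofReal (36 * ε / Real.pi) * (ENNReal.ofReal (Real.pi / (1 + a)) * M) := by
          gcongr; exact weighted_le ha (hM n)
      _ = _ := by
          rw [← ENNReal.ofReal_coe_nnreal, ← mul_assoc, ← ENNReal.ofReal_mul (by positivity),
            ← ENNReal.ofReal_mul (by positivity)]
          congr 2
          field_simp
  have hfinal : ‖Toep μ b (f n) ζ‖ₑ ≤ ENNReal.ofReal (C * ε) := by
    refine (Toep_le hb μ (f n) hζ).trans ?_
    have hsplit : ∫⁻ w in ball (0 : ℂ) 1, ‖f n w‖ₑ ∂μ ≤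
        ENNReal.ofReal (ε * μ.real univ) + ENNReal.ofReal (36 * ε / (1 + a) * M) := by
      conv_lhs => rw [← union_sdiff_cancel hRsub]
      exact (lintegral_union_le _ _ _).trans (add_le_add hcore htail)
    calc _ ≤ ENNReal.ofReal K * (ENNReal.ofReal (ε * μ.real univ) +
          ENNReal.ofReal (36 * ε / (1 + a) * M)) := by gcongr
      _ = _ := by
        rw [← ENNReal.ofReal_add (by positivity) (by positivity), ← ENNReal.ofReal_mul hK0]
        congr 1
        rw [hC]; ring
  rw [← ofReal_norm, ENNReal.ofReal_le_ofReal_iff (by positivity)] at hfinal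
  rw [dist_zero_right]
  refine hfinal.trans_lt ?_
  rw [hεdef, mul_div_assoc', div_lt_iff₀ (by positivity)]
  nlinarith
end
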